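/- arXiv:1606.00716 — 8 statements merged into one kernel-verified Lean document; each statement's English description precedes it below -/
import Mathlib

section
/- Let $(\gamma_n)_{n\ge1}$ be complex numbers with $0<|\gamma_n|\le1$ and define $B_{-1}=0$, $B_0=1$, and $B_n=(b_n/\gamma_n)B_{n-1}-a_nB_{n-2}$ for $n\ge1$. Then for every $n\ge1$ one has $|B_n|-|B_{n-1}|\ge a_n\,(|B_{n-1}|-|B_{n-2}|)$; consequently $|B_n|-|B_{n-1}|\ge\rho_n$ for all $n\ge1$ and $|B_n|\ge v_+(n)$ for all $n\ge-1$. -/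
/-!
If `‖b‖ ≥ 1 + ‖a‖`, the reverse triangle inequality gives
`‖b • x - a • y‖ ≥ (1 + ‖a‖) * ‖x‖ - ‖a‖ * ‖y‖`, so the increment of the norms from `x` to
`b • x - a • y` is at least `‖a‖` times the increment from `y` to `x`. Along the recurrence the
increments therefore dominate the products `ρ n`, and telescoping bounds the norms by the partial
sums of `ρ`. The coefficients `(1 + a) / γ` and `a` meet the hypothesis because `‖γ‖ ≤ 1`.
-/

section Recurrence

variable {R E : Type*} [SeminormedRing R] [SeminormedAddCommGroup E] [Module R E]
  [NormSMulClass R E]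

theorem norm_mul_norm_sub_norm_le_norm_smul_sub_smul_sub_norm {a b : R} (hab : 1 + ‖a‖ ≤ ‖b‖)
    (x y : E) : ‖a‖ * (‖x‖ - ‖y‖) ≤ ‖b • x - a • y‖ - ‖x‖ := by
  have hbx : (1 + ‖a‖) * ‖x‖ ≤ ‖b‖ * ‖x‖ := by gcongr
  have htriangle : ‖b‖ * ‖x‖ - ‖a‖ * ‖y‖ ≤ ‖b • x - a • y‖ := by
    simpa only [norm_smul] using norm_sub_norm_le (b • x) (a • y)
  linarith

theorem le_of_eq_mul_of_mul_le {S : Type*} [Semiring S] [PartialOrder S] [IsOrderedRing S]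
    {ρ d r : ℤ → S} {m : ℤ} (hm : ρ m ≤ d m) (hr : ∀ n, m < n → 0 ≤ r n)
    (hρ : ∀ n, m < n → ρ n = ρ (n - 1) * r n) (hd : ∀ n, m < n → d (n - 1) * r n ≤ d n)
    {n : ℤ} (hmn : m ≤ n) : ρ n ≤ d n := by
  induction n, hmn using Int.leInduction with
  | base => exact hm
  | succ n hmn ih =>
    have hlt : m < n + 1 := Int.lt_add_one_of_le hmn
    calc
      ρ (n + 1) = ρ n * r (n + 1) := by rw [hρ _ hlt, add_sub_cancel_right]
      _ ≤ d n * r (n + 1) := mul_le_mul_of_nonneg_right ih (hr _ hlt)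
      _ ≤ d (n + 1) := by simpa only [add_sub_cancel_right] using hd _ hlt

theorem sum_Icc_le_sub_of_le_sub {G : Type*} [AddCommGroup G] [PartialOrder G]
    [IsOrderedAddMonoid G] {f u : ℤ → G} {m : ℤ} (hf : ∀ k, m ≤ k → f k ≤ u k - u (k - 1))
    {n : ℤ} (hmn : m - 1 ≤ n) : ∑ k ∈ Finset.Icc m n, f k ≤ u n - u (m - 1) := by
  induction n, hmn using Int.leInduction with
  | base => simp
  | succ n hmn ih =>
    have hle : m ≤ n + 1 := sub_le_iff_le_add.mp hmn
    have hstep : f (n + 1) ≤ u (n + 1) - u n := by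
      simpa only [add_sub_cancel_right] using hf (n + 1) hle
    calc
      ∑ k ∈ Finset.Icc m (n + 1), f k = f (n + 1) + ∑ k ∈ Finset.Icc m n, f k := by
        rw [← Finset.insert_Icc_right_eq_Icc_add_one hle, Finset.sum_insert (by simp)]
      _ ≤ (u (n + 1) - u n) + (u n - u (m - 1)) := add_le_add hstep ih
      _ = u (n + 1) - u (m - 1) := sub_add_sub_cancel _ _ _

theorem stmt_0_general (a b : ℤ → R) (hab : ∀ n, 1 ≤ n → 1 + ‖a n‖ ≤ ‖b n‖)
    (ρ : ℤ → ℝ) (hρ0 : ρ 0 = 1) (hρ : ∀ n, 1 ≤ n → ρ n = ρ (n - 1) * ‖a n‖)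
    (v : ℤ → ℝ) (hv : ∀ n, v n = ∑ k ∈ Finset.Icc 0 n, ρ k)
    (B : ℤ → E) (hBm : B (-1) = 0) (hB0 : ‖B 0‖ = 1)
    (hB : ∀ n, 1 ≤ n → B n = b n • B (n - 1) - a n • B (n - 2)) :
    (∀ n, 1 ≤ n → ‖a n‖ * (‖B (n - 1)‖ - ‖B (n - 2)‖) ≤ ‖B n‖ - ‖B (n - 1)‖) ∧
    (∀ n, 1 ≤ n → ρ n ≤ ‖B n‖ - ‖B (n - 1)‖) ∧
    (∀ n, -1 ≤ n → v n ≤ ‖B n‖) := by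
  have hgrowth (n : ℤ) (hn : 1 ≤ n) :
      ‖a n‖ * (‖B (n - 1)‖ - ‖B (n - 2)‖) ≤ ‖B n‖ - ‖B (n - 1)‖ := by
    rw [hB n hn]
    exact norm_mul_norm_sub_norm_le_norm_smul_sub_smul_sub_norm (hab n hn) _ _
  have hincrement (n : ℤ) (hn : 0 ≤ n) : ρ n ≤ ‖B n‖ - ‖B (n - 1)‖ := by
    refine le_of_eq_mul_of_mul_le (d := fun n ↦ ‖B n‖ - ‖B (n - 1)‖) (r := fun n ↦ ‖a n‖)
      (by simp [hρ0, hB0, hBm]) (fun _ _ ↦ norm_nonneg _) hρ (fun k hk ↦ ?_) hn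
    have hpred : k - 1 - 1 = k - 2 := by ring
    simpa only [hpred, mul_comm] using hgrowth k hk
  refine ⟨hgrowth, fun n hn ↦ hincrement n (by lia), fun n hn ↦ ?_⟩
  simpa [hv, hBm] using sum_Icc_le_sub_of_le_sub (u := fun n ↦ ‖B n‖) hincrement hn

end Recurrence

theorem one_add_norm_ofReal_le_norm_one_add_div {𝕜 : Type*} [RCLike 𝕜] {t : ℝ} (ht : 0 ≤ t) {γ : 𝕜}
    (hγ0 : 0 < ‖γ‖) (hγ1 : ‖γ‖ ≤ 1) : 1 + ‖(t : 𝕜)‖ ≤ ‖((1 + t : ℝ) : 𝕜) / γ‖ := by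
  rw [norm_div, RCLike.norm_of_nonneg ht, RCLike.norm_of_nonneg (by positivity)]
  exact le_div_self (by positivity) hγ0 hγ1

/-- Sleszynski–Pringsheim denominators: growth of moduli.
Context: `a n > 0` for `n ≥ 1`, `b n = 1 + a n`, `ρ 0 = 1`, `ρ n = a 1 ⋯ a n`,
`v (-1) = 0`, `v n = ∑_{k=0}^n ρ k`. -/
theorem stmt_0
    (a : ℤ → ℝ) (ha : ∀ n : ℤ, 1 ≤ n → 0 < a n)
    (ρ : ℤ → ℝ) (hρ0 : ρ 0 = 1)
    (hρ : ∀ n : ℤ, 1 ≤ n → ρ n = ρ (n - 1) * a n)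
    (v : ℤ → ℝ) (hv : ∀ n : ℤ, v n = ∑ k ∈ Finset.Icc (0 : ℤ) n, ρ k)
    (γ : ℤ → ℂ) (hγ : ∀ n : ℤ, 1 ≤ n → 0 < ‖γ n‖ ∧ ‖γ n‖ ≤ 1)
    (B : ℤ → ℂ) (hBm : B (-1) = 0) (hB0 : B 0 = 1)
    (hB : ∀ n : ℤ, 1 ≤ n →
      B n = (((1 + a n : ℝ) : ℂ) / γ n) * B (n - 1) - ((a n : ℝ) : ℂ) * B (n - 2)) :
    (∀ n : ℤ, 1 ≤ n →
      a n * (‖B (n - 1)‖ - ‖B (n - 2)‖) ≤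
        ‖B n‖ - ‖B (n - 1)‖) ∧
    (∀ n : ℤ, 1 ≤ n → ρ n ≤ ‖B n‖ - ‖B (n - 1)‖) ∧
    (∀ n : ℤ, -1 ≤ n → v n ≤ ‖B n‖) := by
  have hnorm (n : ℤ) (hn : 1 ≤ n) : ‖(a n : ℂ)‖ = a n := Complex.norm_of_nonneg (ha n hn).le
  obtain ⟨hgrowth, hbounds⟩ := stmt_0_general (fun n ↦ (a n : ℂ))
    (fun n ↦ ((1 + a n : ℝ) : ℂ) / γ n)
    (fun n hn ↦ one_add_norm_ofReal_le_norm_one_add_div (ha n hn).le (hγ n hn).1 (hγ n hn).2)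
    ρ hρ0 (fun n hn ↦ by rw [hnorm n hn, hρ n hn]) v hv B hBm (by simp [hB0]) hB
  exact ⟨fun n hn ↦ hnorm n hn ▸ hgrowth n hn, hbounds⟩
end

section
/- Let $(\gamma_n)_{n\ge1}$ be real numbers with $0<\gamma_n\le1$ and define $B_{-1}=0$, $B_0=1$, $B_n=(b_n/\gamma_n)B_{n-1}-a_nB_{n-2}$ for $n\ge1$. Then $B_n>B_{n-1}$ for all $n\ge0$ (so the sequence is strictly increasing from $B_{-1}=0$). Moreover, if $\gamma_n=1$ for all $n$, then $B_n=v_+(n)$ for all $n\ge-1$, and the companion sequence defined by $A_0=0$, $A_1=a_1$ and $A_n=b_nA_{n-1}-a_nA_{n-2}$ for $n\ge2$ satisfies $A_n=v_+(n)-1$ for all $n\ge0$. -/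
/-!
With coefficients `c n = 1 + a n` the recurrence `u n = c n * u (n - 1) - a n * u (n - 2)` says that
each increment of `u` is `a n` times the previous one. Hence the constants and the partial sums of
`ρ` are solutions, and both identities follow by comparing initial values. Dividing `1 + a n` by
`γ n ∈ (0, 1]` only enlarges it, so as long as `u` is nonnegative its increments stay positive.
-/

section Recurrence

variable {R : Type*} [Ring R]

/-- The three-term recurrence obeyed by the numerators and denominators of a continued fraction with
partial numerators `-a n` and partial denominators `c n`, imposed at the indices `n ≥ m` only; its
initial values sit at `m - 2` and `m - 1`. -/
def IsThreeTermRec (c a : ℤ → R) (m : ℤ) (u : ℤ → R) : Prop :=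
  ∀ n, m ≤ n → u n = c n * u (n - 1) - a n * u (n - 2)

namespace IsThreeTermRec

variable {c a u w : ℤ → R} {m : ℤ}

theorem mono {m' : ℤ} (hu : IsThreeTermRec c a m u) (hm : m ≤ m') : IsThreeTermRec c a m' u :=
  fun n hn ↦ hu n (hm.trans hn)

theorem sub (hu : IsThreeTermRec c a m u) (hw : IsThreeTermRec c a m w) :
    IsThreeTermRec c a m (u - w) := by
  intro n hn
  simp only [Pi.sub_apply, hu n hn, hw n hn]
  noncomm_ring

theorem eq_of_initial_eq (hu : IsThreeTermRec c a m u) (hw : IsThreeTermRec c a m w)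
    (h₂ : u (m - 2) = w (m - 2)) (h₁ : u (m - 1) = w (m - 1)) {n : ℤ} (hn : m - 2 ≤ n) :
    u n = w n := by
  suffices consecutive : u n = w n ∧ u (n + 1) = w (n + 1) from consecutive.1
  induction n, hn using Int.leInduction with
  | base => exact ⟨h₂, by convert h₁ using 2 <;> ring⟩
  | succ n hn ih =>
    refine ⟨ih.2, ?_⟩
    rw [hu (n + 1 + 1) (by lia), hw (n + 1 + 1) (by lia), add_sub_cancel_right, ih.2,
      show n + 1 + 1 - 2 = n by ring, ih.1]

theorem const_one (a : ℤ → R) (m : ℤ) : IsThreeTermRec (1 + a) a m 1 := by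
  intro n _
  simp

theorem sum_Icc {ρ : ℤ → R} (hρ : ∀ n, m + 1 ≤ n → ρ n = a n * ρ (n - 1)) :
    IsThreeTermRec (1 + a) a (m + 1) (fun n ↦ ∑ k ∈ Finset.Icc m n, ρ k) := by
  have sum_step (n : ℤ) (hn : m ≤ n) :
      ∑ k ∈ Finset.Icc m n, ρ k = ρ n + ∑ k ∈ Finset.Icc m (n - 1), ρ k := by
    rw [← Finset.insert_Icc_sub_one_right_eq_Icc hn, Finset.sum_insert (by simp)]
  intro n hn
  have sum_pred := sum_step (n - 1) (by lia)
  rw [show n - 1 - 1 = n - 2 by ring] at sum_pred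
  simp only [Pi.add_apply, Pi.one_apply]
  rw [sum_step n (by lia), hρ n hn, sum_pred]
  noncomm_ring

end IsThreeTermRec

end Recurrence

section Monotonicity

variable {R : Type*} [Ring R] [PartialOrder R] [IsStrictOrderedRing R]

theorem lt_mul_sub_mul_of_one_add_le {a c x y : R} (ha : 0 < a) (hc : 1 + a ≤ c) (hy : 0 ≤ y)
    (hxy : x < y) : y < c * y - a * x :=
  calc
    y = (1 + a) * y - a * y := by noncomm_ring
    _ < (1 + a) * y - a * x := sub_lt_sub_left (mul_lt_mul_of_pos_left hxy ha) _
    _ ≤ c * y - a * x := sub_le_sub_right (mul_le_mul_of_nonneg_right hc hy) _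

theorem IsThreeTermRec.lt_of_one_add_le {c a u : ℤ → R} {m : ℤ} (hu : IsThreeTermRec c a m u)
    (ha : ∀ n, m ≤ n → 0 < a n) (hc : ∀ n, m ≤ n → 1 + a n ≤ c n)
    (h₂ : 0 ≤ u (m - 2)) (h₁ : u (m - 2) < u (m - 1)) {n : ℤ} (hn : m - 1 ≤ n) :
    u (n - 1) < u n := by
  suffices nonneg_and_lt : 0 ≤ u (n - 1) ∧ u (n - 1) < u n from nonneg_and_lt.2
  induction n, hn using Int.leInduction with
  | base => exact (show m - 1 - 1 = m - 2 by ring) ▸ ⟨h₂, h₁⟩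
  | succ n hn ih =>
    obtain ⟨pred_nonneg, pred_lt⟩ := ih
    have hm : m ≤ n + 1 := by lia
    have nonneg : 0 ≤ u n := pred_nonneg.trans pred_lt.le
    rw [hu (n + 1) hm, add_sub_cancel_right, show n + 1 - 2 = n - 1 by ring]
    exact ⟨nonneg, lt_mul_sub_mul_of_one_add_le (ha _ hm) (hc _ hm) nonneg pred_lt⟩

end Monotonicity

theorem stmt_1_general {K : Type*} [Field K] [LinearOrder K] [IsStrictOrderedRing K]
    (a ρ v γ B : ℤ → K) (hρ0 : ρ 0 = 1) (hρ : ∀ n : ℤ, 1 ≤ n → ρ n = ρ (n - 1) * a n)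
    (hv : ∀ n : ℤ, v n = ∑ k ∈ Finset.Icc (0 : ℤ) n, ρ k)
    (hBm : B (-1) = 0) (hB0 : B 0 = 1)
    (hB : ∀ n : ℤ, 1 ≤ n → B n = ((1 + a n) / γ n) * B (n - 1) - a n * B (n - 2)) :
    ((∀ n : ℤ, 1 ≤ n → 0 < a n) → (∀ n : ℤ, 1 ≤ n → 0 < γ n ∧ γ n ≤ 1) →
      ∀ n : ℤ, 0 ≤ n → B (n - 1) < B n) ∧
    ((∀ n : ℤ, 1 ≤ n → γ n = 1) → ∀ n : ℤ, -1 ≤ n → B n = v n) ∧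
    (∀ A : ℤ → K, A 0 = 0 → A 1 = a 1 →
      (∀ n : ℤ, 2 ≤ n → A n = (1 + a n) * A (n - 1) - a n * A (n - 2)) →
      ∀ n : ℤ, 0 ≤ n → A n = v n - 1) := by
  have v_neg_one : v (-1) = 0 := by simp [hv]
  have v_zero : v 0 = 1 := by simp [hv, hρ0]
  have v_rec : IsThreeTermRec (1 + a) a 1 v := by
    rw [funext hv]
    exact IsThreeTermRec.sum_Icc (m := 0) fun n hn ↦ (hρ n hn).trans (mul_comm _ _)
  have v_one : v 1 = 1 + a 1 := by simpa [v_zero, v_neg_one] using v_rec 1 le_rfl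
  refine ⟨fun ha hγ n hn ↦ ?_, fun hγ n hn ↦ ?_, fun A hA0 hA1 hA n hn ↦ ?_⟩
  · have coeff_le (n : ℤ) (hn : 1 ≤ n) : 1 + a n ≤ (1 + a n) / γ n :=
      le_div_self (add_pos one_pos (ha n hn)).le (hγ n hn).1 (hγ n hn).2
    exact IsThreeTermRec.lt_of_one_add_le (m := 1) (c := fun n ↦ (1 + a n) / γ n) hB ha coeff_le
      (by simp [hBm]) (by simp [hBm, hB0]) (by simpa using hn)
  · have B_rec : IsThreeTermRec (1 + a) a 1 B := fun n hn ↦ by simpa [hγ n hn] using hB n hn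
    exact B_rec.eq_of_initial_eq v_rec (by simp [hBm, v_neg_one]) (by simp [hB0, v_zero]) hn
  · have v_sub_one_rec := (v_rec.mono one_le_two).sub (.const_one a 2)
    exact IsThreeTermRec.eq_of_initial_eq (m := 2) hA v_sub_one_rec (by simp [hA0, v_zero])
      (by simp [hA1, v_one]) hn

/-- Real Sleszynski–Pringsheim denominators with `0 < γ n ≤ 1`: strict increase;
when `γ ≡ 1`, `B n = v n` and the companion `A` satisfies `A n = v n - 1`. -/
theorem stmt_1
    (a : ℤ → ℝ) (ha : ∀ n : ℤ, 1 ≤ n → 0 < a n)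
    (ρ : ℤ → ℝ) (hρ0 : ρ 0 = 1)
    (hρ : ∀ n : ℤ, 1 ≤ n → ρ n = ρ (n - 1) * a n)
    (v : ℤ → ℝ) (hv : ∀ n : ℤ, v n = ∑ k ∈ Finset.Icc (0 : ℤ) n, ρ k)
    (γ : ℤ → ℝ) (hγ : ∀ n : ℤ, 1 ≤ n → 0 < γ n ∧ γ n ≤ 1)
    (B : ℤ → ℝ) (hBm : B (-1) = 0) (hB0 : B 0 = 1)
    (hB : ∀ n : ℤ, 1 ≤ n →
      B n = ((1 + a n) / γ n) * B (n - 1) - a n * B (n - 2)) :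
    (∀ n : ℤ, 0 ≤ n → B (n - 1) < B n) ∧
    ((∀ n : ℤ, 1 ≤ n → γ n = 1) →
      (∀ n : ℤ, -1 ≤ n → B n = v n) ∧
      (∀ A : ℤ → ℝ, A 0 = 0 → A 1 = a 1 →
        (∀ n : ℤ, 2 ≤ n → A n = (1 + a n) * A (n - 1) - a n * A (n - 2)) →
        ∀ n : ℤ, 0 ≤ n → A n = v n - 1)) := by
  obtain ⟨B_lt, B_eq, A_eq⟩ := stmt_1_general a ρ v γ B hρ0 hρ hv hBm hB0 hB
  exact ⟨B_lt ha hγ, fun hγ_one ↦ ⟨B_eq hγ_one, A_eq⟩⟩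
end

section
/- Let $(\gamma_n)_{n\ge1}$ be complex numbers with $0<|\gamma_n|\le1$ and define $B_{-1}=0$, $B_0=1$, $B_n=(b_n/\gamma_n)B_{n-1}-a_nB_{n-2}$ for $n\ge1$. Then the map $n\mapsto|B_n|/v_+(n)$ (for $n\ge0$) is non-decreasing, i.e. $v_+(n)\,|B_{n+1}|\ge v_+(n+1)\,|B_n|$ for all $n\ge0$; and for every $n\ge1$, $\sum_{k>n}\rho_k/(|B_k|\,|B_{k-1}|)\le v_+(n)/|B_n|^2\le 1/|B_n|$. -/
/-!
The sequence `v` solves the recurrence of `B` with every `γ n` equal to `1`. Since `‖γ n‖ ≤ 1`, the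
triangle inequality makes `‖B n‖` a supersolution of that recurrence, and comparing the two in a
Casoratian shows that `‖B n‖ / v n` increases. As `ρ (n + 1) = v (n + 1) - v n`, this monotonicity
bounds each term of the series by a difference of consecutive values of `v n / ‖B n‖ ^ 2`.
-/

open Finset

theorem mul_le_mul_of_three_term_supersolution {R : Type*} [CommRing R] [PartialOrder R]
    [IsOrderedRing R] {c d v₀ v₁ v₂ β₀ β₁ β₂ : R} (hd : 0 ≤ d) (hv₁ : 0 ≤ v₁)
    (hv₂ : v₂ = c * v₁ - d * v₀) (hβ₂ : c * β₁ - d * β₀ ≤ β₂) (h : v₁ * β₀ ≤ v₀ * β₁) :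
    v₂ * β₁ ≤ v₁ * β₂ :=
  calc v₂ * β₁ = c * v₁ * β₁ - d * (v₀ * β₁) := by rw [hv₂]; ring
    _ ≤ c * v₁ * β₁ - d * (v₁ * β₀) := by gcongr
    _ = v₁ * (c * β₁ - d * β₀) := by ring
    _ ≤ v₁ * β₂ := by gcongr

theorem sub_div_mul_le_div_sq_sub_div_sq {K : Type*} [Field K] [LinearOrder K]
    [IsStrictOrderedRing K] {v w x y : K} (hx : 0 < x) (hy : 0 < y) (h : w * x ≤ v * y) :
    (w - v) / (y * x) ≤ v / x ^ 2 - w / y ^ 2 := by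
  have hratio : w / y ≤ v / x := (div_le_div_iff₀ hy hx).2 h
  have hleft : w / y / x ≤ v / x / x := by gcongr
  have hright : w / y / y ≤ v / x / y := by gcongr
  calc (w - v) / (y * x) = w / y / x - v / x / y := by field_simp
    _ ≤ v / x / x - w / y / y := by gcongr
    _ = v / x ^ 2 - w / y ^ 2 := by simp only [div_div, sq]

section Telescoping

variable {f g : ℕ → ℝ}

theorem sum_range_le_of_le_sub_succ (hg : ∀ k, 0 ≤ g k) (hfg : ∀ k, f k ≤ g k - g (k + 1))
    (N : ℕ) : ∑ k ∈ range N, f k ≤ g 0 :=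
  calc ∑ k ∈ range N, f k ≤ ∑ k ∈ range N, (g k - g (k + 1)) := sum_le_sum fun k _ => hfg k
    _ = g 0 - g N := sum_range_sub' g N
    _ ≤ g 0 := sub_le_self _ (hg N)

theorem summable_and_tsum_le_of_le_sub_succ (hf : ∀ k, 0 ≤ f k) (hg : ∀ k, 0 ≤ g k)
    (hfg : ∀ k, f k ≤ g k - g (k + 1)) : Summable f ∧ ∑' k, f k ≤ g 0 :=
  ⟨summable_of_sum_range_le hf (sum_range_le_of_le_sub_succ hg hfg),
    Real.tsum_le_of_sum_range_le hf (sum_range_le_of_le_sub_succ hg hfg)⟩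

end Telescoping

theorem mul_norm_sub_mul_norm_le_norm_div_smul_sub_smul {𝕜 E : Type*} [RCLike 𝕜]
    [SeminormedAddCommGroup E] [NormedSpace 𝕜 E] {c d : ℝ} {γ : 𝕜} (hc : 0 ≤ c) (hd : 0 ≤ d)
    (hγ₀ : 0 < ‖γ‖) (hγ₁ : ‖γ‖ ≤ 1) (x y : E) :
    c * ‖x‖ - d * ‖y‖ ≤ ‖((c : 𝕜) / γ) • x - (d : 𝕜) • y‖ :=
  calc c * ‖x‖ - d * ‖y‖ ≤ c / ‖γ‖ * ‖x‖ - d * ‖y‖ := by gcongr; exact le_div_self hc hγ₀ hγ₁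
    _ = ‖((c : 𝕜) / γ) • x‖ - ‖(d : 𝕜) • y‖ := by
      simp only [norm_smul, norm_div, RCLike.norm_of_nonneg hc, RCLike.norm_of_nonneg hd]
    _ ≤ ‖((c : 𝕜) / γ) • x - (d : 𝕜) • y‖ := norm_sub_norm_le _ _

theorem sum_Icc_int_eq_sum_Icc_sub_one_add {M : Type*} [AddCommMonoid M] (f : ℤ → M) {m n : ℤ}
    (h : m ≤ n) : ∑ k ∈ Icc m n, f k = ∑ k ∈ Icc m (n - 1), f k + f n := by
  rw [← insert_Icc_sub_one_right_eq_Icc h, sum_insert (by simp), add_comm]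

theorem sum_Icc_three_term_recurrence {R : Type*} [CommRing R] {a ρ : ℤ → R}
    (hρ : ∀ n, 1 ≤ n → ρ n = ρ (n - 1) * a n) {n : ℤ} (hn : 1 ≤ n) :
    ∑ k ∈ Icc 0 n, ρ k =
      (1 + a n) * ∑ k ∈ Icc 0 (n - 1), ρ k - a n * ∑ k ∈ Icc 0 (n - 2), ρ k := by
  have hprev : n - 1 - 1 = n - 2 := by lia
  have hlast := sum_Icc_int_eq_sum_Icc_sub_one_add ρ (by lia : 0 ≤ n)
  have hlast_prev := sum_Icc_int_eq_sum_Icc_sub_one_add ρ (by lia : 0 ≤ n - 1)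
  rw [hprev] at hlast_prev
  rw [hlast, hρ n hn]
  linear_combination -a n * hlast_prev

section Comparison

variable {R : Type*} [CommRing R] [LinearOrder R] [IsStrictOrderedRing R] {a ρ v β : ℤ → R}

theorem nonneg_of_eq_prev_mul (ha : ∀ n, 1 ≤ n → 0 ≤ a n) (hρ0 : 0 ≤ ρ 0)
    (hρ : ∀ n, 1 ≤ n → ρ n = ρ (n - 1) * a n) {n : ℤ} (hn : 0 ≤ n) : 0 ≤ ρ n := by
  induction n, hn using Int.leInduction with
  | base => exact hρ0
  | succ n hn ih =>
    rw [hρ (n + 1) (by lia), add_sub_cancel_right]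
    exact mul_nonneg ih (ha (n + 1) (by lia))

theorem mul_le_mul_of_supersolution {c d : ℤ → R} (hd : ∀ n, 1 ≤ n → 0 ≤ d n)
    (hv_nonneg : ∀ n, 0 ≤ n → 0 ≤ v n)
    (hv : ∀ n, 1 ≤ n → v n = c n * v (n - 1) - d n * v (n - 2))
    (hβ : ∀ n, 1 ≤ n → c n * β (n - 1) - d n * β (n - 2) ≤ β n)
    (h0 : v 0 * β (-1) ≤ v (-1) * β 0) {n : ℤ} (hn : 0 ≤ n) :
    v n * β (n - 1) ≤ v (n - 1) * β n := by
  induction n, hn using Int.leInduction with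
  | base => exact h0
  | succ n hn ih =>
    have hprev : n + 1 - 1 = n := by lia
    have hprev₂ : n + 1 - 2 = n - 1 := by lia
    have hv' := hv (n + 1) (by lia)
    have hβ' := hβ (n + 1) (by lia)
    rw [hprev, hprev₂] at hv' hβ'
    rw [hprev]
    exact mul_le_mul_of_three_term_supersolution (hd (n + 1) (by lia)) (hv_nonneg n hn) hv' hβ' ih

theorem le_of_mul_succ_le_mul_succ (hv : ∀ n, 0 ≤ n → 0 < v n) (h0 : v 0 ≤ β 0)
    (h : ∀ n, 0 ≤ n → v (n + 1) * β n ≤ v n * β (n + 1)) {n : ℤ} (hn : 0 ≤ n) : v n ≤ β n := by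
  induction n, hn using Int.leInduction with
  | base => exact h0
  | succ n hn ih =>
    refine le_of_mul_le_mul_left ?_ (hv n hn)
    calc v n * v (n + 1) = v (n + 1) * v n := mul_comm _ _
      _ ≤ v (n + 1) * β n := by have := hv (n + 1) (by lia); gcongr
      _ ≤ v n * β (n + 1) := h n hn

end Comparison

theorem summable_and_tsum_tail_le {ρ v β : ℤ → ℝ} (hρ : ∀ n, 0 ≤ n → 0 ≤ ρ n)
    (hv : ∀ n, 0 ≤ n → 0 ≤ v n) (hvρ : ∀ n, 0 ≤ n → ρ (n + 1) = v (n + 1) - v n)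
    (hβ : ∀ n, 0 ≤ n → 0 < β n)
    (hmono : ∀ n, 0 ≤ n → v (n + 1) * β n ≤ v n * β (n + 1)) {n : ℤ} (hn : 0 ≤ n) :
    Summable (fun k : ℕ => ρ (n + 1 + k) / (β (n + 1 + k) * β (n + k))) ∧
      ∑' k : ℕ, ρ (n + 1 + k) / (β (n + 1 + k) * β (n + k)) ≤ v n / β n ^ 2 := by
  have hterm_nonneg (k : ℕ) : 0 ≤ ρ (n + 1 + k) / (β (n + 1 + k) * β (n + k)) :=
    div_nonneg (hρ _ (by lia)) (mul_pos (hβ _ (by lia)) (hβ _ (by lia))).le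
  have hbound_nonneg (k : ℕ) : 0 ≤ v (n + k) / β (n + k) ^ 2 :=
    div_nonneg (hv _ (by lia)) (sq_nonneg _)
  have hterm_le (k : ℕ) : ρ (n + 1 + k) / (β (n + 1 + k) * β (n + k)) ≤
      v (n + k) / β (n + k) ^ 2 - v (n + (k + 1 : ℕ)) / β (n + (k + 1 : ℕ)) ^ 2 := by
    have hindex : n + 1 + k = n + k + 1 := by lia
    have hindex' : n + (k + 1 : ℕ) = n + k + 1 := by lia
    rw [hindex, hindex', hvρ _ (by lia)]
    exact sub_div_mul_le_div_sq_sub_div_sq (hβ _ (by lia)) (hβ _ (by lia)) (hmono _ (by lia))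
  simpa only [Nat.cast_zero, add_zero] using
    summable_and_tsum_le_of_le_sub_succ hterm_nonneg hbound_nonneg hterm_le

theorem stmt_2_general
    {a : ℤ → ℝ} (ha : ∀ n, 1 ≤ n → 0 ≤ a n)
    {ρ : ℤ → ℝ} (hρ0 : ρ 0 = 1) (hρ : ∀ n, 1 ≤ n → ρ n = ρ (n - 1) * a n)
    {v : ℤ → ℝ} (hv : ∀ n, v n = ∑ k ∈ Icc 0 n, ρ k)
    {β : ℤ → ℝ} (hβm : β (-1) ≤ 0) (hβ0 : 1 ≤ β 0)
    (hβ : ∀ n, 1 ≤ n → (1 + a n) * β (n - 1) - a n * β (n - 2) ≤ β n) :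
    (∀ n, 0 ≤ n → v (n + 1) * β n ≤ v n * β (n + 1)) ∧
    ∀ n, 0 ≤ n →
      Summable (fun k : ℕ => ρ (n + 1 + k) / (β (n + 1 + k) * β (n + k))) ∧
      ∑' k : ℕ, ρ (n + 1 + k) / (β (n + 1 + k) * β (n + k)) ≤ v n / β n ^ 2 ∧
      v n / β n ^ 2 ≤ 1 / β n := by
  have hρ_nonneg (n : ℤ) : 0 ≤ n → 0 ≤ ρ n := nonneg_of_eq_prev_mul ha (by simp [hρ0]) hρ
  have hvm : v (-1) = 0 := by simp [hv]
  have hv0 : v 0 = 1 := by simp [hv, hρ0]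
  have hv_pos (n : ℤ) (hn : 0 ≤ n) : 0 < v n := by
    rw [hv]
    exact sum_pos' (fun k hk => hρ_nonneg k (mem_Icc.1 hk).1) ⟨0, by simp [hn, hρ0]⟩
  have hvρ (n : ℤ) (hn : 0 ≤ n) : ρ (n + 1) = v (n + 1) - v n := by
    simp [hv, sum_Icc_int_eq_sum_Icc_sub_one_add ρ (by lia : 0 ≤ n + 1)]
  have hv_three_term (n : ℤ) (hn : 1 ≤ n) : v n = (1 + a n) * v (n - 1) - a n * v (n - 2) := by
    simpa only [hv] using sum_Icc_three_term_recurrence hρ hn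
  have hmono (n : ℤ) (hn : 0 ≤ n) : v (n + 1) * β n ≤ v n * β (n + 1) := by
    simpa using mul_le_mul_of_supersolution ha (fun n hn => (hv_pos n hn).le)
      hv_three_term hβ (by simpa [hvm, hv0]) (by lia : 0 ≤ n + 1)
  have hvβ (n : ℤ) : 0 ≤ n → v n ≤ β n := le_of_mul_succ_le_mul_succ hv_pos (hv0 ▸ hβ0) hmono
  have hβ_pos (n : ℤ) (hn : 0 ≤ n) : 0 < β n := (hv_pos n hn).trans_le (hvβ n hn)
  refine ⟨hmono, fun n hn => ?_⟩
  obtain ⟨hsummable, htsum⟩ :=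
    summable_and_tsum_tail_le hρ_nonneg (fun n hn => (hv_pos n hn).le) hvρ hβ_pos hmono hn
  refine ⟨hsummable, htsum, ?_⟩
  rw [sq, ← div_div]
  exact div_le_div_of_nonneg_right ((div_le_one (hβ_pos n hn)).2 (hvβ n hn)) (hβ_pos n hn).le

/-- Monotonicity of `n ↦ |B n| / v n` and the tail estimate
`∑_{k>n} ρ k / (|B k| |B (k-1)|) ≤ v n / |B n|^2 ≤ 1 / |B n|`. -/
theorem stmt_2
    (a : ℤ → ℝ) (ha : ∀ n : ℤ, 1 ≤ n → 0 < a n)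
    (ρ : ℤ → ℝ) (hρ0 : ρ 0 = 1)
    (hρ : ∀ n : ℤ, 1 ≤ n → ρ n = ρ (n - 1) * a n)
    (v : ℤ → ℝ) (hv : ∀ n : ℤ, v n = ∑ k ∈ Finset.Icc (0 : ℤ) n, ρ k)
    (γ : ℤ → ℂ) (hγ : ∀ n : ℤ, 1 ≤ n → 0 < ‖γ n‖ ∧ ‖γ n‖ ≤ 1)
    (B : ℤ → ℂ) (hBm : B (-1) = 0) (hB0 : B 0 = 1)
    (hB : ∀ n : ℤ, 1 ≤ n →
      B n = (((1 + a n : ℝ) : ℂ) / γ n) * B (n - 1) - ((a n : ℝ) : ℂ) * B (n - 2)) :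
    (∀ n : ℤ, 0 ≤ n →
      v (n + 1) * ‖B n‖ ≤ v n * ‖B (n + 1)‖) ∧
    (∀ n : ℤ, 1 ≤ n →
      Summable (fun k : ℕ =>
        ρ (n + 1 + (k : ℤ)) /
          (‖B (n + 1 + (k : ℤ))‖ * ‖B (n + (k : ℤ))‖)) ∧
      (∑' k : ℕ, ρ (n + 1 + (k : ℤ)) /
          (‖B (n + 1 + (k : ℤ))‖ * ‖B (n + (k : ℤ))‖)) ≤
        v n / (‖B n‖) ^ 2 ∧
      v n / (‖B n‖) ^ 2 ≤ 1 / ‖B n‖) := by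
  have hB_norm (n : ℤ) (hn : 1 ≤ n) :
      (1 + a n) * ‖B (n - 1)‖ - a n * ‖B (n - 2)‖ ≤ ‖B n‖ := by
    rw [hB n hn]
    exact mul_norm_sub_mul_norm_le_norm_div_smul_sub_smul (by linarith [ha n hn]) (ha n hn).le
      (hγ n hn).1 (hγ n hn).2 (B (n - 1)) (B (n - 2))
  have h := stmt_2_general (β := fun n => ‖B n‖) (fun n hn => (ha n hn).le) hρ0 hρ hv
    (by simp [hBm]) (by simp [hB0]) hB_norm
  exact ⟨h.1, fun n hn => h.2 n (by lia)⟩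
end

section
/- Assume $v_+(n)\to+\infty$ as $n\to\infty$. Let $(\gamma_n)_{n\ge1}$ be complex numbers with $0<|\gamma_n|\le1$, and define $B_{-1}=0$, $B_0=1$, $B_n=(b_n/\gamma_n)B_{n-1}-a_nB_{n-2}$ for $n\ge1$, and $A_0=0$, $A_1=a_1$, $A_n=(b_n/\gamma_n)A_{n-1}-a_nA_{n-2}$ for $n\ge2$. Then the series $L=\sum_{k\ge1}\rho_k/(B_kB_{k-1})$ converges absolutely with $\sum_{k\ge1}\rho_k/(|B_k|\,|B_{k-1}|)\le1$, the convergents $A_n/B_n$ converge to $L$ as $n\to\infty$, and moreover for any complex sequence $(\gamma'_n)$ with $|\gamma'_n|\le1$, setting $\tilde A_n=(b_n/\gamma_n-\gamma'_n)A_{n-1}-a_nA_{n-2}$ and $\tilde B_n=(b_n/\gamma_n-\gamma'_n)B_{n-1}-a_nB_{n-2}$, one has $|\tilde B_n|\ge\rho_n$ and $\tilde A_n/\tilde B_n\to L$ as $n\to\infty$. -/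
open Filter

/-!
Let `A n / B n` be the convergents of `α 0 / (β 0 - α 1 / (β 1 - ⋯))`, where `1 + ‖α n‖ ≤ ‖β n‖`,
and put `ρ n = α 0 ⋯ α (n - 1)`. By induction, the reverse triangle inequality in the three-term
recurrence gives `‖ρ (n + 1)‖ ≤ ‖B (n + 1)‖ - ‖B n‖`. Hence
`‖ρ (n + 1)‖ / (‖B (n + 1)‖ ‖B n‖) ≤ 1 / ‖B n‖ - 1 / ‖B (n + 1)‖`, which telescopes to a total of
at most `1`, while the Casoratian identity `A (n + 1) B n - A n B (n + 1) = ρ (n + 1)` makes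
`A n / B n` the partial sums of the series. Replacing `β n` by `β n - w` with `‖w‖ ≤ 1` costs at
most `‖B n‖` in the denominator `B (n + 1)`, which thus keeps modulus at least `‖ρ (n + 1)‖`; by the
Casoratian identity again, the perturbed convergent is within `1 / ‖B n‖` of `A n / B n`, and
`‖B n‖ ≥ ‖ρ 0‖ + ⋯ + ‖ρ n‖ → ∞`.
-/

section CommRing

variable {R : Type*} [CommRing R]

/-- Denominators of the convergents of the continued fraction `α 0 / (β 0 - α 1 / (β 1 - ⋯))`. The
partial quotients are indexed from `0`, so `convDen α β n` involves only those with index `< n`. -/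
def convDen (α β : ℕ → R) : ℕ → R
  | 0 => 1
  | 1 => β 0
  | n + 2 => β (n + 1) * convDen α β (n + 1) - α (n + 1) * convDen α β n

/-- Numerators of the convergents of the continued fraction `α 0 / (β 0 - α 1 / (β 1 - ⋯))`, with
the same indexing as `convDen`. -/
def convNum (α β : ℕ → R) : ℕ → R
  | 0 => 0
  | 1 => α 0
  | n + 2 => β (n + 1) * convNum α β (n + 1) - α (n + 1) * convNum α β n

theorem convNum_mul_convDen_sub (α β : ℕ → R) (n : ℕ) :
    convNum α β (n + 1) * convDen α β n - convNum α β n * convDen α β (n + 1) =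
      ∏ i ∈ Finset.range (n + 1), α i := by
  induction n with
  | zero => simp [convNum, convDen]
  | succ n ih =>
    rw [Finset.prod_range_succ, ← ih, convNum, convDen]
    ring

end CommRing

theorem sum_div_mul_le_inv_sub_inv {K : Type*} [Field K] [LinearOrder K] [IsStrictOrderedRing K]
    {x r : ℕ → K} (hx : ∀ n, 0 < x n) (hr : ∀ n, r n ≤ x (n + 1) - x n) (n : ℕ) :
    ∑ k ∈ Finset.range n, r k / (x (k + 1) * x k) ≤ (x 0)⁻¹ - (x n)⁻¹ := by
  calc ∑ k ∈ Finset.range n, r k / (x (k + 1) * x k)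
      ≤ ∑ k ∈ Finset.range n, ((x k)⁻¹ - (x (k + 1))⁻¹) := by
        refine Finset.sum_le_sum fun k _ ↦ ?_
        rw [inv_sub_inv (hx k).ne' (hx (k + 1)).ne', mul_comm (x k)]
        exact div_le_div_of_nonneg_right (hr k) (mul_pos (hx _) (hx _)).le
    _ = (x 0)⁻¹ - (x n)⁻¹ := Finset.sum_range_sub' (fun k ↦ (x k)⁻¹) n

section Field

variable {K : Type*} [Field K] {α β : ℕ → K}

theorem sum_prod_div_convDen_mul_eq (hB : ∀ n, convDen α β n ≠ 0) (n : ℕ) :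
    ∑ k ∈ Finset.range n,
        (∏ i ∈ Finset.range (k + 1), α i) / (convDen α β (k + 1) * convDen α β k) =
      convNum α β n / convDen α β n := by
  have hterm (k : ℕ) :
      (∏ i ∈ Finset.range (k + 1), α i) / (convDen α β (k + 1) * convDen α β k) =
        convNum α β (k + 1) / convDen α β (k + 1) - convNum α β k / convDen α β k := by
    rw [div_sub_div _ _ (hB _) (hB _), ← convNum_mul_convDen_sub α β k,
      mul_comm (convNum α β k)]
  simp only [hterm, Finset.sum_range_sub (fun k ↦ convNum α β k / convDen α β k)]
  simp [convNum]

theorem convNum_sub_div_convDen_sub_sub {n : ℕ} {w : K} (hB : convDen α β n ≠ 0)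
    (hBw : convDen α β (n + 1) - w * convDen α β n ≠ 0) :
    (convNum α β (n + 1) - w * convNum α β n) / (convDen α β (n + 1) - w * convDen α β n) -
        convNum α β n / convDen α β n =
      (∏ i ∈ Finset.range (n + 1), α i) /
        ((convDen α β (n + 1) - w * convDen α β n) * convDen α β n) := by
  rw [div_sub_div _ _ hBw hB, ← convNum_mul_convDen_sub α β n]
  ring

end Field

section NormedField

variable {𝕜 : Type*} [NormedField 𝕜] {α β : ℕ → 𝕜}

theorem prod_norm_le_norm_convDen_sub_norm_convDen (hβ : ∀ n, 1 + ‖α n‖ ≤ ‖β n‖)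
    (n : ℕ) :
    ∏ i ∈ Finset.range (n + 1), ‖α i‖ ≤ ‖convDen α β (n + 1)‖ - ‖convDen α β n‖ := by
  induction n with
  | zero => simpa [convDen] using le_sub_iff_add_le'.2 (hβ 0)
  | succ n ih =>
    have hrec : ‖β (n + 1)‖ * ‖convDen α β (n + 1)‖ - ‖α (n + 1)‖ * ‖convDen α β n‖ ≤
        ‖convDen α β (n + 2)‖ := by
      simpa only [convDen, norm_mul] using norm_sub_norm_le
        (β (n + 1) * convDen α β (n + 1)) (α (n + 1) * convDen α β n)
    calc ∏ i ∈ Finset.range (n + 2), ‖α i‖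
        ≤ (‖convDen α β (n + 1)‖ - ‖convDen α β n‖) * ‖α (n + 1)‖ := by
          rw [Finset.prod_range_succ]
          gcongr
      _ = (1 + ‖α (n + 1)‖) * ‖convDen α β (n + 1)‖ - ‖α (n + 1)‖ * ‖convDen α β n‖ -
          ‖convDen α β (n + 1)‖ := by ring
      _ ≤ ‖β (n + 1)‖ * ‖convDen α β (n + 1)‖ - ‖α (n + 1)‖ * ‖convDen α β n‖ -
          ‖convDen α β (n + 1)‖ := by
          gcongr
          exact hβ (n + 1)
      _ ≤ ‖convDen α β (n + 2)‖ - ‖convDen α β (n + 1)‖ := by gcongr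

theorem sum_prod_norm_le_norm_convDen (hβ : ∀ n, 1 + ‖α n‖ ≤ ‖β n‖) (n : ℕ) :
    ∑ k ∈ Finset.range (n + 1), ∏ i ∈ Finset.range k, ‖α i‖ ≤ ‖convDen α β n‖ := by
  induction n with
  | zero => simp [convDen]
  | succ n ih =>
    rw [Finset.sum_range_succ]
    linarith [prod_norm_le_norm_convDen_sub_norm_convDen hβ n]

theorem norm_convDen_pos (hβ : ∀ n, 1 + ‖α n‖ ≤ ‖β n‖) (n : ℕ) : 0 < ‖convDen α β n‖ := by
  refine lt_of_lt_of_le ?_ (sum_prod_norm_le_norm_convDen hβ n)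
  rw [Finset.sum_range_succ', Finset.prod_range_zero]
  positivity

theorem convDen_ne_zero (hβ : ∀ n, 1 + ‖α n‖ ≤ ‖β n‖) (n : ℕ) : convDen α β n ≠ 0 :=
  norm_pos_iff.1 (norm_convDen_pos hβ n)

theorem sum_prod_norm_div_norm_convDen_mul_le_one (hβ : ∀ n, 1 + ‖α n‖ ≤ ‖β n‖) (n : ℕ) :
    ∑ k ∈ Finset.range n, (∏ i ∈ Finset.range (k + 1), ‖α i‖) /
      (‖convDen α β (k + 1)‖ * ‖convDen α β k‖) ≤ 1 := by
  have htelescope := sum_div_mul_le_inv_sub_inv (norm_convDen_pos hβ)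
    (prod_norm_le_norm_convDen_sub_norm_convDen hβ) n
  have hzero : ‖convDen α β 0‖⁻¹ = 1 := by simp [convDen]
  exact htelescope.trans (hzero ▸ sub_le_self _ (by positivity))

theorem summable_prod_norm_div_norm_convDen_mul (hβ : ∀ n, 1 + ‖α n‖ ≤ ‖β n‖) :
    Summable fun k ↦ (∏ i ∈ Finset.range (k + 1), ‖α i‖) /
      (‖convDen α β (k + 1)‖ * ‖convDen α β k‖) :=
  summable_of_sum_range_le (fun _ ↦ by positivity) (sum_prod_norm_div_norm_convDen_mul_le_one hβ)

theorem tendsto_convNum_div_convDen [CompleteSpace 𝕜] (hβ : ∀ n, 1 + ‖α n‖ ≤ ‖β n‖) :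
    Tendsto (fun n ↦ convNum α β n / convDen α β n) atTop
      (nhds (∑' k, (∏ i ∈ Finset.range (k + 1), α i) /
        (convDen α β (k + 1) * convDen α β k))) := by
  have hsum : Summable fun k ↦
      (∏ i ∈ Finset.range (k + 1), α i) / (convDen α β (k + 1) * convDen α β k) :=
    .of_norm <| by
      simpa only [norm_div, norm_mul, norm_prod] using summable_prod_norm_div_norm_convDen_mul hβ
  exact hsum.hasSum.tendsto_sum_nat.congr (sum_prod_div_convDen_mul_eq (convDen_ne_zero hβ))

theorem prod_norm_le_norm_convDen_sub_mul (hβ : ∀ n, 1 + ‖α n‖ ≤ ‖β n‖) (n : ℕ) {w : 𝕜}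
    (hw : ‖w‖ ≤ 1) :
    ∏ i ∈ Finset.range (n + 1), ‖α i‖ ≤ ‖convDen α β (n + 1) - w * convDen α β n‖ :=
  calc ∏ i ∈ Finset.range (n + 1), ‖α i‖
      ≤ ‖convDen α β (n + 1)‖ - 1 * ‖convDen α β n‖ := by
        simpa using prod_norm_le_norm_convDen_sub_norm_convDen hβ n
    _ ≤ ‖convDen α β (n + 1)‖ - ‖w * convDen α β n‖ := by
        rw [norm_mul]
        gcongr
    _ ≤ ‖convDen α β (n + 1) - w * convDen α β n‖ := norm_sub_norm_le _ _

theorem norm_convNum_sub_div_convDen_sub_sub_le (hβ : ∀ n, 1 + ‖α n‖ ≤ ‖β n‖)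
    (hα : ∀ n, α n ≠ 0) (n : ℕ) {w : 𝕜} (hw : ‖w‖ ≤ 1) :
    ‖(convNum α β (n + 1) - w * convNum α β n) / (convDen α β (n + 1) - w * convDen α β n) -
        convNum α β n / convDen α β n‖ ≤ ‖convDen α β n‖⁻¹ := by
  have hle := prod_norm_le_norm_convDen_sub_mul hβ n hw
  have hpos : 0 < ‖convDen α β (n + 1) - w * convDen α β n‖ :=
    (Finset.prod_pos fun i _ ↦ norm_pos_iff.2 (hα i)).trans_le hle
  rw [convNum_sub_div_convDen_sub_sub (convDen_ne_zero hβ n) (norm_pos_iff.1 hpos), norm_div,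
    norm_mul, norm_prod, ← div_div]
  exact (div_le_div_of_nonneg_right ((div_le_one hpos).2 hle) (norm_nonneg _)).trans_eq
    (one_div _)

theorem tendsto_convNum_sub_div_convDen_sub [CompleteSpace 𝕜]
    (hβ : ∀ n, 1 + ‖α n‖ ≤ ‖β n‖) (hα : ∀ n, α n ≠ 0)
    (hdiv : Tendsto (fun n ↦ ∑ k ∈ Finset.range (n + 1), ∏ i ∈ Finset.range k, ‖α i‖) atTop atTop)
    {w : ℕ → 𝕜} (hw : ∀ n, ‖w n‖ ≤ 1) :
    Tendsto (fun n ↦ (convNum α β (n + 1) - w n * convNum α β n) /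
        (convDen α β (n + 1) - w n * convDen α β n)) atTop
      (nhds (∑' k, (∏ i ∈ Finset.range (k + 1), α i) /
        (convDen α β (k + 1) * convDen α β k))) := by
  have hden : Tendsto (fun n ↦ ‖convDen α β n‖⁻¹) atTop (nhds 0) :=
    (tendsto_atTop_mono (sum_prod_norm_le_norm_convDen hβ) hdiv).inv_tendsto_atTop
  have hdiff := squeeze_zero_norm
    (fun n ↦ norm_convNum_sub_div_convDen_sub_sub_le hβ hα n (hw n)) hden
  simpa using hdiff.add (tendsto_convNum_div_convDen hβ)

end NormedField

section IntRecurrence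

variable {R : Type*} [CommRing R] {a b A B w tA tB : ℤ → R}

theorem eq_convDen_of_int_recurrence (hBm : B (-1) = 0) (hB0 : B 0 = 1)
    (hB : ∀ n : ℤ, 1 ≤ n → B n = b n * B (n - 1) - a n * B (n - 2)) (n : ℕ) :
    B n = convDen (fun k ↦ a (k + 1)) (fun k ↦ b (k + 1)) n := by
  induction n using Nat.twoStepInduction with
  | zero => simp [convDen, hB0]
  | one => simp [convDen, hB 1 le_rfl, hB0, hBm]
  | more n ih₀ ih₁ =>
    have hrec := hB (n + 2) (by lia)
    rw [show (n : ℤ) + 2 - 1 = (n + 1 : ℕ) by lia, add_sub_cancel_right, ih₀, ih₁] at hrec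
    simpa [convDen, add_assoc] using hrec

theorem eq_convNum_of_int_recurrence (hA0 : A 0 = 0) (hA1 : A 1 = a 1)
    (hA : ∀ n : ℤ, 2 ≤ n → A n = b n * A (n - 1) - a n * A (n - 2)) (n : ℕ) :
    A n = convNum (fun k ↦ a (k + 1)) (fun k ↦ b (k + 1)) n := by
  induction n using Nat.twoStepInduction with
  | zero => simp [convNum, hA0]
  | one => simp [convNum, hA1]
  | more n ih₀ ih₁ =>
    have hrec := hA (n + 2) (by lia)
    rw [show (n : ℤ) + 2 - 1 = (n + 1 : ℕ) by lia, add_sub_cancel_right, ih₀, ih₁] at hrec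
    simpa [convNum, add_assoc] using hrec

theorem eq_convDen_sub_mul_of_int_recurrence (hBm : B (-1) = 0) (hB0 : B 0 = 1)
    (hB : ∀ n : ℤ, 1 ≤ n → B n = b n * B (n - 1) - a n * B (n - 2))
    (htB : ∀ n : ℤ, 1 ≤ n → tB n = (b n - w n) * B (n - 1) - a n * B (n - 2)) (n : ℕ) :
    tB (n + 1 : ℕ) = convDen (fun k ↦ a (k + 1)) (fun k ↦ b (k + 1)) (n + 1) -
      w (n + 1 : ℕ) * convDen (fun k ↦ a (k + 1)) (fun k ↦ b (k + 1)) n := by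
  have hBn := eq_convDen_of_int_recurrence hBm hB0 hB
  have hprev : ((n + 1 : ℕ) : ℤ) - 1 = n := by simp
  rw [← hBn, ← hBn, htB _ (by simp), hB (n + 1 : ℕ) (by simp), hprev]
  ring

theorem eq_convNum_sub_mul_of_int_recurrence (hA0 : A 0 = 0) (hA1 : A 1 = a 1)
    (hA : ∀ n : ℤ, 2 ≤ n → A n = b n * A (n - 1) - a n * A (n - 2))
    (htA : ∀ n : ℤ, 2 ≤ n → tA n = (b n - w n) * A (n - 1) - a n * A (n - 2)) (n : ℕ) :
    tA (n + 2 : ℕ) = convNum (fun k ↦ a (k + 1)) (fun k ↦ b (k + 1)) (n + 2) -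
      w (n + 2 : ℕ) * convNum (fun k ↦ a (k + 1)) (fun k ↦ b (k + 1)) (n + 1) := by
  have hAn := eq_convNum_of_int_recurrence hA0 hA1 hA
  have hprev : ((n + 2 : ℕ) : ℤ) - 1 = (n + 1 : ℕ) := by lia
  rw [← hAn, ← hAn, htA _ (by simp), hA (n + 2 : ℕ) (by simp), hprev]
  ring

end IntRecurrence

theorem eq_prod_range_of_int_recurrence {M : Type*} [CommMonoid M] {a ρ : ℤ → M} (hρ0 : ρ 0 = 1)
    (hρ : ∀ n : ℤ, 1 ≤ n → ρ n = ρ (n - 1) * a n) (n : ℕ) :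
    ρ n = ∏ i ∈ Finset.range n, a (i + 1) := by
  induction n with
  | zero => simpa using hρ0
  | succ n ih =>
    rw [Finset.prod_range_succ, ← ih, Nat.cast_add_one, hρ _ (by lia), add_sub_cancel_right]

theorem nonneg_of_int_recurrence {K : Type*} [CommSemiring K] [PartialOrder K] [IsOrderedRing K]
    {a ρ : ℤ → K} (ha : ∀ n : ℤ, 1 ≤ n → 0 ≤ a n) (hρ0 : ρ 0 = 1)
    (hρ : ∀ n : ℤ, 1 ≤ n → ρ n = ρ (n - 1) * a n) {n : ℤ} (hn : 0 ≤ n) : 0 ≤ ρ n := by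
  lift n to ℕ using hn
  rw [eq_prod_range_of_int_recurrence hρ0 hρ n]
  exact Finset.prod_nonneg fun i _ ↦ ha _ (by simp)

theorem sum_Icc_natCast_eq_sum_range {M : Type*} [AddCommMonoid M] (f : ℤ → M) (n : ℕ) :
    ∑ k ∈ Finset.Icc (0 : ℤ) n, f k = ∑ k ∈ Finset.range (n + 1), f k := by
  induction n with
  | zero => simp
  | succ n ih =>
    rw [Finset.sum_range_succ, ← ih, Nat.cast_add_one,
      ← Finset.insert_Icc_right_eq_Icc_add_one (by lia), Finset.sum_insert (by simp), add_comm]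

theorem stmt_3_general {𝕜 : Type*} [NormedField 𝕜] [CompleteSpace 𝕜]
    {a b : ℤ → 𝕜} (ha : ∀ n : ℤ, 1 ≤ n → a n ≠ 0) (hb : ∀ n : ℤ, 1 ≤ n → 1 + ‖a n‖ ≤ ‖b n‖)
    {ρ : ℤ → 𝕜} (hρ0 : ρ 0 = 1) (hρ : ∀ n : ℤ, 1 ≤ n → ρ n = ρ (n - 1) * a n)
    (hdiv : Tendsto (fun n : ℕ ↦ ∑ k ∈ Finset.Icc (0 : ℤ) n, ‖ρ k‖) atTop atTop)
    {B : ℤ → 𝕜} (hBm : B (-1) = 0) (hB0 : B 0 = 1)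
    (hB : ∀ n : ℤ, 1 ≤ n → B n = b n * B (n - 1) - a n * B (n - 2))
    {A : ℤ → 𝕜} (hA0 : A 0 = 0) (hA1 : A 1 = a 1)
    (hA : ∀ n : ℤ, 2 ≤ n → A n = b n * A (n - 1) - a n * A (n - 2))
    {w : ℤ → 𝕜} (hw : ∀ n : ℤ, 1 ≤ n → ‖w n‖ ≤ 1)
    {tA : ℤ → 𝕜} (htA : ∀ n : ℤ, 2 ≤ n → tA n = (b n - w n) * A (n - 1) - a n * A (n - 2))
    {tB : ℤ → 𝕜} (htB : ∀ n : ℤ, 1 ≤ n → tB n = (b n - w n) * B (n - 1) - a n * B (n - 2)) :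
    ∃ L : 𝕜,
      L = ∑' k : ℕ, ρ (k + 1) / (B (k + 1) * B k) ∧
      Summable (fun k : ℕ ↦ ‖ρ (k + 1)‖ / (‖B (k + 1)‖ * ‖B k‖)) ∧
      ∑' k : ℕ, ‖ρ (k + 1)‖ / (‖B (k + 1)‖ * ‖B k‖) ≤ 1 ∧
      Tendsto (fun n : ℕ ↦ A n / B n) atTop (nhds L) ∧
      (∀ n : ℤ, 1 ≤ n → ‖ρ n‖ ≤ ‖tB n‖) ∧
      Tendsto (fun n : ℕ ↦ tA (n + 2) / tB (n + 2)) atTop (nhds L) := by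
  let α (k : ℕ) : 𝕜 := a (k + 1)
  let β (k : ℕ) : 𝕜 := b (k + 1)
  have hα (k : ℕ) : α k ≠ 0 := ha _ (by lia)
  have hβ (k : ℕ) : 1 + ‖α k‖ ≤ ‖β k‖ := hb _ (by lia)
  have hw' (k : ℕ) : ‖w (k + 1 : ℕ)‖ ≤ 1 := hw _ (by simp)
  have hBn : ∀ n : ℕ, B n = convDen α β n := eq_convDen_of_int_recurrence hBm hB0 hB
  have hAn : ∀ n : ℕ, A n = convNum α β n := eq_convNum_of_int_recurrence hA0 hA1 hA
  have hρn : ∀ n : ℕ, ρ n = ∏ i ∈ Finset.range n, α i := eq_prod_range_of_int_recurrence hρ0 hρ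
  have htBn : ∀ n : ℕ,
      tB (n + 1 : ℕ) = convDen α β (n + 1) - w (n + 1 : ℕ) * convDen α β n :=
    eq_convDen_sub_mul_of_int_recurrence hBm hB0 hB htB
  have htAn : ∀ n : ℕ,
      tA (n + 2 : ℕ) = convNum α β (n + 2) - w (n + 2 : ℕ) * convNum α β (n + 1) :=
    eq_convNum_sub_mul_of_int_recurrence hA0 hA1 hA htA
  have hdiv' : Tendsto (fun n ↦ ∑ k ∈ Finset.range (n + 1), ∏ i ∈ Finset.range k, ‖α i‖)
      atTop atTop := by
    simpa only [sum_Icc_natCast_eq_sum_range, hρn, norm_prod] using hdiv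
  have hcast_two (n : ℕ) : (n : ℤ) + 2 = (n + 2 : ℕ) := by simp
  simp only [hcast_two, ← Nat.cast_add_one, hBn, hAn, hρn, norm_prod]
  refine ⟨_, rfl, summable_prod_norm_div_norm_convDen_mul hβ,
    Real.tsum_le_of_sum_range_le (fun _ ↦ by positivity)
      (sum_prod_norm_div_norm_convDen_mul_le_one hβ),
    tendsto_convNum_div_convDen hβ, fun n hn ↦ ?_, ?_⟩
  · obtain ⟨m, rfl⟩ : ∃ m : ℕ, n = (m + 1 : ℕ) := ⟨(n - 1).toNat, by lia⟩
    rw [hρn, htBn, norm_prod]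
    exact prod_norm_le_norm_convDen_sub_mul hβ m (hw' m)
  · simp only [htAn, htBn]
    exact (tendsto_convNum_sub_div_convDen_sub hβ hα hdiv' hw').comp (tendsto_add_atTop_nat 1)

theorem one_add_norm_ofReal_le_norm_div {𝕜 : Type*} [RCLike 𝕜] {a : ℝ} (ha : 0 ≤ a) {γ : 𝕜}
    (hγ_pos : 0 < ‖γ‖) (hγ_le : ‖γ‖ ≤ 1) : 1 + ‖(a : 𝕜)‖ ≤ ‖((1 + a : ℝ) : 𝕜) / γ‖ := by
  rw [norm_div, RCLike.norm_of_nonneg ha, RCLike.norm_of_nonneg (by positivity)]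
  exact le_div_self (by positivity) hγ_pos hγ_le

/-- Convergence of Sleszynski–Pringsheim continued fractions:
absolute convergence of the series `∑ ρ k / (B k B (k-1))` with sum of moduli `≤ 1`,
convergence of the convergents `A n / B n` to the sum `L`, and stability of the limit
under a bounded perturbation `γ'` of the last partial denominator. -/
theorem stmt_3
    (a : ℤ → ℝ) (ha : ∀ n : ℤ, 1 ≤ n → 0 < a n)
    (ρ : ℤ → ℝ) (hρ0 : ρ 0 = 1)
    (hρ : ∀ n : ℤ, 1 ≤ n → ρ n = ρ (n - 1) * a n)
    (v : ℤ → ℝ) (hv : ∀ n : ℤ, v n = ∑ k ∈ Finset.Icc (0 : ℤ) n, ρ k)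
    (hvlim : Tendsto (fun n : ℕ => v (n : ℤ)) atTop atTop)
    (γ : ℤ → ℂ) (hγ : ∀ n : ℤ, 1 ≤ n → 0 < ‖γ n‖ ∧ ‖γ n‖ ≤ 1)
    (B : ℤ → ℂ) (hBm : B (-1) = 0) (hB0 : B 0 = 1)
    (hB : ∀ n : ℤ, 1 ≤ n →
      B n = (((1 + a n : ℝ) : ℂ) / γ n) * B (n - 1) - ((a n : ℝ) : ℂ) * B (n - 2))
    (A : ℤ → ℂ) (hA0 : A 0 = 0) (hA1 : A 1 = ((a 1 : ℝ) : ℂ))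
    (hA : ∀ n : ℤ, 2 ≤ n →
      A n = (((1 + a n : ℝ) : ℂ) / γ n) * A (n - 1) - ((a n : ℝ) : ℂ) * A (n - 2))
    (γ' : ℤ → ℂ) (hγ' : ∀ n : ℤ, 1 ≤ n → ‖γ' n‖ ≤ 1)
    (tA : ℤ → ℂ)
    (htA : ∀ n : ℤ, 2 ≤ n →
      tA n = ((((1 + a n : ℝ) : ℂ) / γ n - γ' n)) * A (n - 1) - ((a n : ℝ) : ℂ) * A (n - 2))
    (tB : ℤ → ℂ)
    (htB : ∀ n : ℤ, 1 ≤ n →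
      tB n = ((((1 + a n : ℝ) : ℂ) / γ n - γ' n)) * B (n - 1) - ((a n : ℝ) : ℂ) * B (n - 2)) :
    ∃ L : ℂ,
      L = (∑' k : ℕ, ((ρ ((k : ℤ) + 1) : ℝ) : ℂ) / (B ((k : ℤ) + 1) * B (k : ℤ))) ∧
      Summable (fun k : ℕ =>
        ρ ((k : ℤ) + 1) / (‖B ((k : ℤ) + 1)‖ * ‖B (k : ℤ)‖)) ∧
      (∑' k : ℕ, ρ ((k : ℤ) + 1) /
          (‖B ((k : ℤ) + 1)‖ * ‖B (k : ℤ)‖)) ≤ 1 ∧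
      Tendsto (fun n : ℕ => A (n : ℤ) / B (n : ℤ)) atTop (nhds L) ∧
      (∀ n : ℤ, 1 ≤ n → ρ n ≤ ‖tB n‖) ∧
      Tendsto (fun n : ℕ => tA ((n : ℤ) + 2) / tB ((n : ℤ) + 2)) atTop (nhds L) := by
  have hρ_norm (n : ℤ) (hn : 0 ≤ n) : ‖(ρ n : ℂ)‖ = ρ n :=
    Complex.norm_of_nonneg (nonneg_of_int_recurrence (fun n hn ↦ (ha n hn).le) hρ0 hρ hn)
  have hb (n : ℤ) (hn : 1 ≤ n) : 1 + ‖(a n : ℂ)‖ ≤ ‖((1 + a n : ℝ) : ℂ) / γ n‖ :=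
    one_add_norm_ofReal_le_norm_div (ha n hn).le (hγ n hn).1 (hγ n hn).2
  have hdiv : Tendsto (fun n : ℕ ↦ ∑ k ∈ Finset.Icc (0 : ℤ) n, ‖(ρ k : ℂ)‖) atTop atTop :=
    hvlim.congr fun n ↦ (hv n).trans <|
      Finset.sum_congr rfl fun k hk ↦ (hρ_norm k (Finset.mem_Icc.1 hk).1).symm
  obtain ⟨L, hL, hsum, hle, hlim, htB_ge, htlim⟩ := stmt_3_general (ρ := fun n ↦ (ρ n : ℂ))
    (fun n hn ↦ Complex.ofReal_ne_zero.2 (ha n hn).ne') hb (by simp [hρ0])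
    (fun n hn ↦ by simp [hρ n hn]) hdiv hBm hB0 hB hA0 hA1 hA hγ' htA htB
  have hρ_norm_succ (k : ℕ) : ‖(ρ (k + 1) : ℂ)‖ = ρ (k + 1) := hρ_norm _ (by positivity)
  simp only [hρ_norm_succ] at hsum hle
  exact ⟨L, hL, hsum, hle, hlim, fun n hn ↦ hρ_norm n (by lia) ▸ htB_ge n hn, htlim⟩
end

section
/- Let $n\ge2$ and $0\le s\le1$. Define $B_{-1}=0$, $B_0=1$, $B_k=b_kB_{k-1}-a_kB_{k-2}$ for $1\le k\le n-1$ (so $B_k=v_+(k)$), and $A_{-1}=1$, $A_0=0$, $A_1=a_1$, $A_k=b_kA_{k-1}-a_kA_{k-2}$ for $2\le k\le n-1$ (so $A_k=v_+(k)-1$). Set $\tilde B_n=(b_n-s)B_{n-1}-a_nB_{n-2}$ and $\tilde A_n=(b_n-s)A_{n-1}-a_nA_{n-2}$. Then $\tilde B_n\ge\rho_n$, $\tilde B_n\ge(1-s)\,v_+(n-1)$, and the value of the finite continued fraction $[(a_1,b_1);(-a_2,b_2);\dots;(-a_n,b_n-s)]$ satisfies $\frac{\tilde A_n}{\tilde B_n}=\frac{v_+(n-1)-1}{v_+(n-1)}+\frac{\rho_n}{v_+(n-1)\,\tilde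 B_n}$. -/
/-!
The recurrence `uₖ = (1 + aₖ) uₖ₋₁ - aₖ uₖ₋₂` says that the increments of `u` are multiplied by `aₖ`
at step `k`. The continuants `A` and `B` have the same first increment `a₁ = ρ₁`, so all their
increments are `ρₖ`, which gives `Bₖ = v₊(k)` and `Aₖ = v₊(k) - 1`. The last step, perturbed by `s`,
produces `(1 - s) uₙ₋₁ + ρₙ` for `u = A` and for `u = B`, and the theorem is read off from these two
values.
-/

section CommRing

variable {R : Type*} [CommRing R]

/-- The three-term recurrence of the continuants of `[(a₁,b₁);(-a₂,b₂);…]` with `bₖ = 1 + aₖ`, for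
the indices `2 ≤ k ≤ N`. The index `1` is left out because the first partial numerator `a₁` has the
opposite sign: the values at `0` and `1` are the initial data. -/
def SatisfiesContinuantRecurrence (a : ℕ → R) (N : ℕ) (u : ℤ → R) : Prop :=
  ∀ k : ℕ, 2 ≤ k → k ≤ N → u (k : ℤ) = (1 + a k) * u ((k : ℤ) - 1) - a k * u ((k : ℤ) - 2)

/-- The value produced from `uₙ₋₁` and `uₙ₋₂` by the last step of the recurrence when `bₙ` is
replaced by `bₙ - s`; for `u = A, B` these are the paper's `Ãₙ` and `B̃ₙ`. -/
def perturbedContinuant (a : ℕ → R) (s : R) (n : ℕ) (u : ℤ → R) : R :=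
  (1 + a n - s) * u ((n : ℤ) - 1) - a n * u ((n : ℤ) - 2)

namespace SatisfiesContinuantRecurrence

variable {a ρ : ℕ → R} {u : ℤ → R} {N : ℕ}

theorem succ_sub_self (hu : SatisfiesContinuantRecurrence a N u)
    (hρ : ∀ k, ρ (k + 1) = ρ k * a (k + 1)) (hu₁ : u 1 - u 0 = ρ 1) {k : ℕ} (hk : k < N) :
    u ((k : ℤ) + 1) - u k = ρ (k + 1) := by
  induction k with
  | zero => simpa using hu₁
  | succ k ih =>
    have step := hu (k + 2) (by lia) hk
    rw [show ((k + 2 : ℕ) : ℤ) - 1 = k + 1 by lia, show ((k + 2 : ℕ) : ℤ) - 2 = k by lia] at step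
    calc u (((k + 1 : ℕ) : ℤ) + 1) - u ((k + 1 : ℕ) : ℤ)
        = u ((k + 2 : ℕ) : ℤ) - u ((k : ℤ) + 1) := by push_cast; ring_nf
      _ = (u ((k : ℤ) + 1) - u k) * a (k + 2) := by rw [step]; ring
      _ = ρ (k + 2) := by rw [ih (by lia), hρ (k + 1)]

theorem eq_add_sum (hu : SatisfiesContinuantRecurrence a N u)
    (hρ : ∀ k, ρ (k + 1) = ρ k * a (k + 1)) (hu₁ : u 1 - u 0 = ρ 1) {k : ℕ} (hk : k ≤ N) :
    u k = u 0 - ρ 0 + ∑ j ∈ Finset.range (k + 1), ρ j := by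
  have telescope : ∑ j ∈ Finset.range k, ρ (j + 1) = u k - u 0 := calc
    _ = ∑ j ∈ Finset.range k, (u ((j + 1 : ℕ) : ℤ) - u (j : ℤ)) :=
      Finset.sum_congr rfl fun j hj ↦ by
        push_cast
        exact (hu.succ_sub_self hρ hu₁ ((Finset.mem_range.mp hj).trans_le hk)).symm
    _ = u k - u 0 := Finset.sum_range_sub (fun j : ℕ ↦ u j) k
  rw [Finset.sum_range_succ', telescope]
  ring

theorem perturbedContinuant_eq {n : ℕ} (hu : SatisfiesContinuantRecurrence a (n - 1) u)
    (hρ : ∀ k, ρ (k + 1) = ρ k * a (k + 1)) (hu₁ : u 1 - u 0 = ρ 1) (hn : 2 ≤ n) (s : R) :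
    perturbedContinuant a s n u = (1 - s) * u ((n : ℤ) - 1) + ρ n := by
  obtain ⟨m, rfl⟩ := Nat.exists_eq_add_of_le' hn
  have increment : u ((m : ℤ) + 1) - u m = ρ (m + 1) := hu.succ_sub_self hρ hu₁ (by lia)
  rw [perturbedContinuant, hρ (m + 1), ← increment,
    show ((m + 2 : ℕ) : ℤ) - 1 = m + 1 by lia, show ((m + 2 : ℕ) : ℤ) - 2 = m by lia]
  ring

end SatisfiesContinuantRecurrence

end CommRing

theorem mul_add_div_mul_add_eq {K : Type*} [Field K] {t v w r : K} (hv : v ≠ 0)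
    (hd : t * v + r ≠ 0) :
    (t * w + r) / (t * v + r) = w / v + r * (v - w) / (v * (t * v + r)) := by
  rw [div_add_div _ _ hv (mul_ne_zero hv hd),
    div_eq_div_iff hd (mul_ne_zero hv (mul_ne_zero hv hd))]
  ring

theorem pos_of_succ_eq_mul {R : Type*} [Semiring R] [PartialOrder R] [IsStrictOrderedRing R]
    {a ρ : ℕ → R} (ha : ∀ k, 1 ≤ k → 0 < a k) (hρ₀ : 0 < ρ 0)
    (hρ : ∀ k, ρ (k + 1) = ρ k * a (k + 1)) (k : ℕ) : 0 < ρ k := by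
  induction k with
  | zero => exact hρ₀
  | succ k ih => exact hρ k ▸ mul_pos ih (ha (k + 1) k.succ_pos)

theorem stmt_6_general {K : Type*} [Field K] [LinearOrder K] [IsStrictOrderedRing K]
    (a : ℕ → K) (ha : ∀ k, 1 ≤ k → 0 < a k)
    (ρ : ℕ → K) (hρ₀ : ρ 0 = 1) (hρ : ∀ k, ρ (k + 1) = ρ k * a (k + 1))
    (v : ℕ → K) (hv : ∀ k, v k = ∑ j ∈ Finset.range (k + 1), ρ j)
    (n : ℕ) (hn : 2 ≤ n) (s : K) (hs : s ≤ 1)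
    (B : ℤ → K) (hB₀ : B 0 = 1) (hB₁ : B 1 = 1 + a 1)
    (hB : SatisfiesContinuantRecurrence a (n - 1) B)
    (A : ℤ → K) (hA₀ : A 0 = 0) (hA₁ : A 1 = a 1)
    (hA : SatisfiesContinuantRecurrence a (n - 1) A) :
    ρ n ≤ perturbedContinuant a s n B ∧
    (1 - s) * v (n - 1) ≤ perturbedContinuant a s n B ∧
    perturbedContinuant a s n A / perturbedContinuant a s n B =
      (v (n - 1) - 1) / v (n - 1) + ρ n / (v (n - 1) * perturbedContinuant a s n B) := by
  have ρ_one : ρ 1 = a 1 := by rw [hρ 0, hρ₀, one_mul]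
  have ρ_pos : ∀ k, 0 < ρ k := pos_of_succ_eq_mul ha (hρ₀ ▸ one_pos) hρ
  have v_pos : 0 < v (n - 1) := hv _ ▸ Finset.sum_pos (fun j _ ↦ ρ_pos j) (by simp)
  have incrB : B 1 - B 0 = ρ 1 := by rw [hB₀, hB₁, ρ_one, add_sub_cancel_left]
  have incrA : A 1 - A 0 = ρ 1 := by rw [hA₀, hA₁, ρ_one, sub_zero]
  have cast_pred : (n : ℤ) - 1 = (n - 1 : ℕ) := by lia
  have B_pred : B ((n : ℤ) - 1) = v (n - 1) := by
    rw [cast_pred, hB.eq_add_sum hρ incrB le_rfl, hB₀, hρ₀, hv, sub_self, zero_add]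
  have A_pred : A ((n : ℤ) - 1) = v (n - 1) - 1 := by
    rw [cast_pred, hA.eq_add_sum hρ incrA le_rfl, hA₀, hρ₀, hv, zero_sub, neg_add_eq_sub]
  have main_nonneg : 0 ≤ (1 - s) * v (n - 1) := mul_nonneg (sub_nonneg.mpr hs) v_pos.le
  have denom_pos : 0 < (1 - s) * v (n - 1) + ρ n := add_pos_of_nonneg_of_pos main_nonneg (ρ_pos n)
  rw [hB.perturbedContinuant_eq hρ incrB hn, hA.perturbedContinuant_eq hρ incrA hn, B_pred, A_pred]
  refine ⟨le_add_of_nonneg_left main_nonneg, le_add_of_nonneg_right (ρ_pos n).le, ?_⟩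
  rw [mul_add_div_mul_add_eq v_pos.ne' denom_pos.ne', sub_sub_cancel, mul_one]

/-- The perturbed convergent `[(a₁,b₁);(-a₂,b₂);…;(-aₙ,bₙ-s)]`:
lower bounds on the perturbed denominator and the exact value of the fraction. -/
theorem stmt_6
    (a : ℕ → ℝ) (ha : ∀ k : ℕ, 1 ≤ k → 0 < a k)
    (ρ : ℕ → ℝ) (hρ0 : ρ 0 = 1)
    (hρ : ∀ k : ℕ, 1 ≤ k → ρ k = ρ (k - 1) * a k)
    (v : ℕ → ℝ) (hv : ∀ k : ℕ, v k = ∑ j ∈ Finset.range (k + 1), ρ j)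
    (n : ℕ) (hn : 2 ≤ n) (s : ℝ) (hs0 : 0 ≤ s) (hs1 : s ≤ 1)
    (B : ℤ → ℝ) (hBm : B (-1) = 0) (hB0 : B 0 = 1)
    (hB : ∀ k : ℕ, 1 ≤ k → k ≤ n - 1 →
      B (k : ℤ) = (1 + a k) * B ((k : ℤ) - 1) - a k * B ((k : ℤ) - 2))
    (A : ℤ → ℝ) (hAm : A (-1) = 1) (hA0 : A 0 = 0) (hA1 : A 1 = a 1)
    (hA : ∀ k : ℕ, 2 ≤ k → k ≤ n - 1 →
      A (k : ℤ) = (1 + a k) * A ((k : ℤ) - 1) - a k * A ((k : ℤ) - 2)) :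
    ρ n ≤ (1 + a n - s) * B ((n : ℤ) - 1) - a n * B ((n : ℤ) - 2) ∧
    (1 - s) * v (n - 1) ≤ (1 + a n - s) * B ((n : ℤ) - 1) - a n * B ((n : ℤ) - 2) ∧
    ((1 + a n - s) * A ((n : ℤ) - 1) - a n * A ((n : ℤ) - 2)) /
        ((1 + a n - s) * B ((n : ℤ) - 1) - a n * B ((n : ℤ) - 2)) =
      (v (n - 1) - 1) / v (n - 1) +
        ρ n / (v (n - 1) * ((1 + a n - s) * B ((n : ℤ) - 1) - a n * B ((n : ℤ) - 2))) := by
  exact stmt_6_general a ha ρ hρ0 (fun k ↦ hρ (k + 1) k.succ_pos) v hv n hn s hs1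
    B hB0 (by simpa [hBm, hB0] using hB 1 le_rfl (by lia)) (fun k hk ↦ hB k (by lia)) A hA0 hA1 hA
end

section
/- For all real $x\ge1$ and $K\ge1$ such that $\psi^{-1}(x)\ge1$, one has $\psi^{-1}(Kx)\le 2K^2\,\psi^{-1}(x)$ (as elements of $[0,+\infty]$). -/
open scoped ENNReal

/-- Generalized inverse (in `ℕ∞ = ℕ ∪ {+∞}`) of `f : ℕ → ℝ` at `x ∈ ℝ`:
`sup {n | f n ≤ x}`, with `sup ∅ = 0` and `sup ℕ = +∞`. -/
noncomputable def invR (f : ℕ → ℝ) (x : ℝ) : ℕ∞ :=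
  sSup ((fun m : ℕ => (m : ℕ∞)) '' {m : ℕ | f m ≤ x})

/-- Generalized inverse (in `ℕ∞`) of `f : ℕ → ℝ≥0∞` at `x ∈ ℝ≥0∞`. -/
noncomputable def invE (f : ℕ → ℝ≥0∞) (x : ℝ≥0∞) : ℕ∞ :=
  sSup ((fun m : ℕ => (m : ℕ∞)) '' {m : ℕ | f m ≤ x})

/-- Evaluation of `f : ℕ → ℝ` at an extended natural, with value `+∞` at `+∞`. -/
noncomputable def extF (f : ℕ → ℝ) : ℕ∞ → ℝ≥0∞ :=
  fun n => if n = ⊤ then ⊤ else ENNReal.ofReal (f n.toNat)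

/-!
Since `w±` and the generalized inverses of `v±` are non-decreasing, so is `ψ(n)² / n`. If
`N = ψ⁻¹(x)` is finite, then `x < ψ(N + 1)`, so for any `m > N` with `ψ(m) ≤ K x`
`x² / (N + 1) ≤ ψ(N + 1)² / (N + 1) ≤ ψ(m)² / m ≤ K² x² / m`,
that is, `m ≤ (N + 1) K² ≤ 2 K² N`.
-/

theorem invR_mono (f : ℕ → ℝ) : Monotone (invR f) := fun _ _ hxy =>
  sSup_le_sSup (Set.image_mono fun _ hm => le_trans hm hxy)

theorem extF_mono {f : ℕ → ℝ} (hf : Monotone f) : Monotone (extF f) := by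
  intro m n hmn
  by_cases hn : n = ⊤
  · simp [extF, hn]
  · have hm : m ≠ ⊤ := ne_top_of_le_ne_top hn hmn
    simp only [extF, hn, hm, if_false]
    exact ENNReal.ofReal_le_ofReal (hf (ENat.toNat_le_toNat hmn hn))

theorem le_mul_pow_of_mul_pow_le_mul_pow {x K s t u v : ℝ≥0∞} {d : ℕ}
    (h : t * u ^ d ≤ s * v ^ d) (hx : x ≠ 0) (hxu : x < u) (hv : v ≤ K * x) : t ≤ s * K ^ d := by
  have hxd : x ^ d ≠ 0 := pow_ne_zero d hx
  have hxd_top : x ^ d ≠ ⊤ := ENNReal.pow_ne_top hxu.ne_top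
  refine (ENNReal.mul_le_mul_iff_left hxd hxd_top).1 ?_
  calc t * x ^ d ≤ t * u ^ d := by gcongr
    _ ≤ s * v ^ d := h
    _ ≤ s * (K * x) ^ d := by gcongr
    _ = s * K ^ d * x ^ d := by rw [mul_pow, mul_assoc]

section DominatedVariation

variable {f : ℕ → ℝ≥0∞} {x K : ℝ≥0∞} {m d : ℕ}

theorem natCast_le_invE (hm : f m ≤ x) : (m : ℕ∞) ≤ invE f x :=
  le_sSup ⟨m, hm, rfl⟩

theorem lt_of_invE_lt_natCast (hm : invE f x < m) : x < f m :=
  lt_of_not_ge fun h => (natCast_le_invE h).not_gt hm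

theorem toENNReal_invE_le_iff {c : ℝ≥0∞} :
    (invE f x : ℝ≥0∞) ≤ c ↔ ∀ m, f m ≤ x → (m : ℝ≥0∞) ≤ c := by
  rw [← ENat.le_floor]
  simp [invE]

/-- Hypothesis `hf` says, without dividing, that `f n ^ d / n` is non-decreasing in `n`. -/
theorem toENNReal_invE_mul_le
    (hf : ∀ ⦃n m : ℕ⦄, n ≤ m → (m : ℝ≥0∞) * f n ^ d ≤ n * f m ^ d)
    (hK : 1 ≤ K) (hinv : 1 ≤ invE f x) :
    (invE f (K * x) : ℝ≥0∞) ≤ 2 * K ^ d * invE f x := by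
  have hKd : 1 ≤ K ^ d := one_le_pow₀ hK
  refine toENNReal_invE_le_iff.2 fun m hm => ?_
  rcases le_or_gt (m : ℕ∞) (invE f x) with hle | hlt
  · calc (m : ℝ≥0∞) ≤ invE f x := mod_cast ENat.toENNReal_le.2 hle
      _ ≤ 2 * K ^ d * invE f x := le_mul_of_one_le_left' (one_le_mul one_le_two hKd)
  · have hxm : x < f m := lt_of_invE_lt_natCast hlt
    have hx : x ≠ 0 := by
      rintro rfl
      exact hxm.not_ge (by simpa using hm)
    obtain ⟨N, hN⟩ := ENat.ne_top_iff_exists.1 hlt.ne_top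
    rw [← hN] at hinv hlt ⊢
    have hN_pos : 1 ≤ N := mod_cast hinv
    have hNm : N + 1 ≤ m := mod_cast hlt
    have hxN : x < f (N + 1) := lt_of_invE_lt_natCast (hN ▸ mod_cast N.lt_succ_self)
    have hN_succ : N + 1 ≤ 2 * N := by lia
    calc (m : ℝ≥0∞) ≤ (N + 1 : ℕ) * K ^ d :=
          le_mul_pow_of_mul_pow_le_mul_pow (hf hNm) hx hxN hm
      _ ≤ (2 * N : ℕ) * K ^ d := by gcongr
      _ = 2 * K ^ d * (N : ℕ∞) := by push_cast; ring

end DominatedVariation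

theorem pos_of_mul_recurrence {𝕜 : Type*} [Field 𝕜] [LinearOrder 𝕜] [IsStrictOrderedRing 𝕜]
    {a ρ : ℤ → 𝕜} (ha : ∀ n, 0 < a n) (hρ_zero : 0 < ρ 0)
    (hρ_succ : ∀ n : ℤ, 1 ≤ n → ρ n = ρ (n - 1) * a n)
    (hρ_pred : ∀ n : ℤ, n ≤ -1 → ρ n = ρ (n + 1) / a (n + 1)) (n : ℤ) : 0 < ρ n := by
  induction n using Int.induction_on with
  | zero => exact hρ_zero
  | succ i ih =>
    rw [hρ_succ _ (by lia), add_sub_cancel_right]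
    exact mul_pos ih (ha _)
  | pred i ih =>
    rw [hρ_pred _ (by lia), sub_add_cancel]
    exact div_pos ih (ha _)

theorem monotone_sum_Icc_natCast {M : Type*} [AddCommMonoid M] [PartialOrder M]
    [IsOrderedAddMonoid M] {g : ℤ → M} (hg : ∀ k, 0 ≤ g k) (b : ℤ) :
    Monotone fun n : ℕ => ∑ k ∈ Finset.Icc b n, g k :=
  (Finset.sum_mono_set_of_nonneg hg).comp fun _ _ hmn =>
    Finset.Icc_subset_Icc_right (mod_cast hmn)

theorem monotone_sum_Icc_neg_natCast_sub_one {M : Type*} [AddCommMonoid M] [PartialOrder M]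
    [IsOrderedAddMonoid M] {g : ℤ → M} (hg : ∀ k, 0 ≤ g k) (b : ℤ) :
    Monotone fun n : ℕ => ∑ k ∈ Finset.Icc (-(n : ℤ) - 1) b, g k :=
  (Finset.sum_mono_set_of_nonneg hg).comp fun _ _ hmn =>
    Finset.Icc_subset_Icc_left (by lia)

theorem toENNReal_invE_mul_le_of_monotone {vp vm wp wm : ℕ → ℝ}
    (hwp : Monotone wp) (hwm : Monotone wm) {ψ : ℕ → ℝ≥0∞}
    (hψ : ∀ n : ℕ, (ψ n) ^ 2 =
      (n : ℝ≥0∞) * (extF wp (invR vp (n : ℝ)) + extF wm (invR vm (n : ℝ))))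
    {x K : ℝ≥0∞} (hK : 1 ≤ K) (hinv : 1 ≤ invE ψ x) :
    (invE ψ (K * x) : ℝ≥0∞) ≤ 2 * K ^ 2 * invE ψ x := by
  refine toENNReal_invE_mul_le (fun n m hnm => ?_) hK hinv
  have hcast : (n : ℝ) ≤ m := mod_cast hnm
  rw [hψ, hψ, mul_left_comm]
  gcongr
  · exact extF_mono hwp (invR_mono vp hcast)
  · exact extF_mono hwm (invR_mono vm hcast)

theorem stmt_7_general {a ρ : ℤ → ℝ} (ha : ∀ n, 0 < a n) (hρ0 : ρ 0 = 1)
    (hρp : ∀ n : ℤ, 1 ≤ n → ρ n = ρ (n - 1) * a n)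
    (hρm : ∀ n : ℤ, n ≤ -1 → ρ n = ρ (n + 1) / a (n + 1))
    {vp vm wp wm : ℕ → ℝ}
    (hwp : ∀ n : ℕ, wp n = ∑ k ∈ Finset.Icc (0 : ℤ) (n : ℤ), 1 / ρ k)
    (hwm : ∀ n : ℕ, wm n = (1 / a 0) * ∑ k ∈ Finset.Icc (-(n : ℤ) - 1) (-1 : ℤ), 1 / ρ k)
    {ψ : ℕ → ℝ≥0∞}
    (hψ : ∀ n : ℕ, (ψ n) ^ 2 =
      (n : ℝ≥0∞) * (extF wp (invR vp (n : ℝ)) + extF wm (invR vm (n : ℝ))))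
    {x K : ℝ≥0∞} (hK : 1 ≤ K) (hinv : 1 ≤ invE ψ x) :
    (invE ψ (K * x) : ℝ≥0∞) ≤ 2 * K ^ 2 * invE ψ x := by
  have hρ_pos : ∀ n, 0 < ρ n := pos_of_mul_recurrence ha (hρ0 ▸ one_pos) hρp hρm
  have hρ_inv_nonneg (k : ℤ) : 0 ≤ 1 / ρ k := (one_div_pos.2 (hρ_pos k)).le
  have hwp_mono : Monotone wp := funext hwp ▸ monotone_sum_Icc_natCast hρ_inv_nonneg 0
  have hwm_mono : Monotone wm := funext hwm ▸
    (monotone_sum_Icc_neg_natCast_sub_one hρ_inv_nonneg (-1)).const_mul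
      (one_div_pos.2 (ha 0)).le
  exact toENNReal_invE_mul_le_of_monotone hwp_mono hwm_mono hψ hK hinv

/-- Dominated variation for `ψ`, where
`ψ²(n) = n (wp(vp⁻¹(n)) + wm(vm⁻¹(n)))`: for `x, K ≥ 1` with `ψ⁻¹(x) ≥ 1`,
`ψ⁻¹(Kx) ≤ 2K² ψ⁻¹(x)` in `[0, +∞]`. -/
theorem stmt_7
    (δ : ℝ) (hδ : 0 < δ)
    (p q r : ℤ → ℝ)
    (hsum : ∀ n, p n + q n + r n = 1)
    (hmin : ∀ n, δ ≤ p n ∧ δ ≤ q n ∧ δ ≤ r n)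
    (a : ℤ → ℝ) (ha : ∀ n, a n = q n / p n)
    (ρ : ℤ → ℝ) (hρ0 : ρ 0 = 1)
    (hρp : ∀ n : ℤ, 1 ≤ n → ρ n = ρ (n - 1) * a n)
    (hρm : ∀ n : ℤ, n ≤ -1 → ρ n = ρ (n + 1) / a (n + 1))
    (vp vm wp wm : ℕ → ℝ)
    (hvp : ∀ n : ℕ, vp n = ∑ k ∈ Finset.Icc (0 : ℤ) (n : ℤ), ρ k)
    (hvm : ∀ n : ℕ, vm n = a 0 * ∑ k ∈ Finset.Icc (-(n : ℤ) - 1) (-1 : ℤ), ρ k)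
    (hwp : ∀ n : ℕ, wp n = ∑ k ∈ Finset.Icc (0 : ℤ) (n : ℤ), 1 / ρ k)
    (hwm : ∀ n : ℕ, wm n = (1 / a 0) * ∑ k ∈ Finset.Icc (-(n : ℤ) - 1) (-1 : ℤ), 1 / ρ k)
    (ψ : ℕ → ℝ≥0∞)
    (hψ : ∀ n : ℕ, (ψ n) ^ 2 =
      (n : ℝ≥0∞) * (extF wp (invR vp (n : ℝ)) + extF wm (invR vm (n : ℝ))))
    (x K : ℝ) (hx : 1 ≤ x) (hK : 1 ≤ K)
    (h1 : (1 : ℕ∞) ≤ invE ψ (ENNReal.ofReal x)) :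
    (ENat.toENNReal (invE ψ (ENNReal.ofReal (K * x)))) ≤
      ENNReal.ofReal (2 * K ^ 2) * ENat.toENNReal (invE ψ (ENNReal.ofReal x)) := by
  have ha_pos (n : ℤ) : 0 < a n :=
    ha n ▸ div_pos (hδ.trans_le (hmin n).2.1) (hδ.trans_le (hmin n).1)
  simpa [ENNReal.ofReal_mul, ENNReal.ofReal_pow, zero_le_one.trans hK] using
    stmt_7_general ha_pos hρ0 hρp hρm hwp hwm hψ (ENNReal.one_le_ofReal.2 hK) h1
end

section
/- Let $(\rho_k)_{k\ge0}$ be positive reals with $\rho_0=1$, let $(c_s)_{s\ge1}$ be reals, set $v_+(n)=\sum_{k=0}^n\rho_k$, $\zeta_k^l=\sum_{s=k}^l c_s/\rho_s$ (with $\zeta_k^l=0$ if $k>l$), and $\kappa(n)=\sum_{0\le k<l\le n}\rho_k\rho_l(\zeta_{k+1}^l)^2$. Then for every $n\ge1$: $\kappa(n)=v_+(n)\sum_{0\le k<n}\rho_k(\zeta_{k+1}^n)^2-\Big(\sum_{0\le k\le n}\rho_k\zeta_{k+1}^n\Big)^2$ and $\frac{\kappa(n)}{v_+(n)}=\frac{\kappa(n-1)}{v_+(n-1)}+\frac{\rho_n}{v_+(n)v_+(n-1)}\Big(\sum_{0\le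 k<n}\rho_k\zeta_{k+1}^n\Big)^2$; in particular $n\mapsto\kappa(n)/v_+(n)$ is non-decreasing. -/
/-!
For the partial sums `Z n = ∑_{s ≤ n} c s / ρ s` one has `ζ (k + 1) l = Z l - Z k`, so `κ n` is the
weighted sum of the squared differences of `Z 0, …, Z n`. By Lagrange's identity this is the
weighted variance expression `(∑ ρ) (∑ ρ Z²) - (∑ ρ Z)²`, which does not change when `Z k` is
replaced by `a - Z k`; the choice `a = Z n` gives the first formula. The same choice of `a` also
serves for the index `n - 1`: with `A = ∑_{k < n} ρ k (Z n - Z k)²` and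
`B = ∑_{k < n} ρ k (Z n - Z k)`, one has `κ n / v n = A - B² / v n` and
`κ (n - 1) / v (n - 1) = A - B² / v (n - 1)`.
-/

open Finset

theorem sum_Icc_succ_eq_sub {G : Type*} [AddCommGroup G] (f : ℕ → G) {k l : ℕ} (hkl : k ≤ l) :
    ∑ s ∈ Icc (k + 1) l, f s = ∑ s ∈ range (l + 1), f s - ∑ s ∈ range (k + 1), f s := by
  rw [← Ico_add_one_right_eq_Icc, sum_Ico_eq_sub f (by lia)]

theorem sum_range_succ_pos {M : Type*} [AddCommMonoid M] [PartialOrder M]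
    [IsOrderedCancelAddMonoid M] {w : ℕ → M} (hw : ∀ k, 0 < w k) (n : ℕ) :
    0 < ∑ k ∈ range (n + 1), w k :=
  sum_pos (fun k _ => hw k) nonempty_range_add_one

section CommRing

variable {R : Type*} [CommRing R]

theorem sum_mul_const_sub_sq {ι : Type*} (s : Finset ι) (w x : ι → R) (a : R) :
    ∑ i ∈ s, w i * (a - x i) ^ 2 =
      a ^ 2 * ∑ i ∈ s, w i - 2 * a * ∑ i ∈ s, w i * x i + ∑ i ∈ s, w i * x i ^ 2 := by
  simp only [mul_sum, ← sum_sub_distrib, ← sum_add_distrib]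
  exact sum_congr rfl fun i _ => by ring

/-- The weighted sum of the squared differences over all pairs `k < l < n`, that is, the squared
total weight times the variance of the points `x 0, …, x (n - 1)` with weights
`w 0, …, w (n - 1)`. The paper's `κ n` is its value at `n + 1`. -/
def pairDispersion (w x : ℕ → R) (n : ℕ) : R :=
  ∑ l ∈ range n, ∑ k ∈ range l, w k * w l * (x l - x k) ^ 2

variable (w x : ℕ → R)

theorem pairDispersion_succ (n : ℕ) :
    pairDispersion w x (n + 1) =
      pairDispersion w x n + w n * ∑ k ∈ range n, w k * (x n - x k) ^ 2 := by
  rw [pairDispersion, sum_range_succ, mul_sum, ← pairDispersion]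
  exact congrArg _ (sum_congr rfl fun k _ => by ring)

theorem pairDispersion_const_sub (a : R) (n : ℕ) :
    pairDispersion w (fun k => a - x k) n = pairDispersion w x n :=
  sum_congr rfl fun l _ => sum_congr rfl fun k _ => by ring

theorem pairDispersion_eq_sum_mul_sum_sub_sq (n : ℕ) :
    pairDispersion w x n =
      (∑ k ∈ range n, w k) * ∑ k ∈ range n, w k * x k ^ 2 - (∑ k ∈ range n, w k * x k) ^ 2 := by
  induction n with
  | zero => simp [pairDispersion]
  | succ n ih =>
    rw [pairDispersion_succ, ih, sum_mul_const_sub_sq]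
    simp only [sum_range_succ]
    ring

theorem pairDispersion_eq_sum_const_sub (a : R) (n : ℕ) :
    pairDispersion w x n =
      (∑ k ∈ range n, w k) * ∑ k ∈ range n, w k * (a - x k) ^ 2 -
        (∑ k ∈ range n, w k * (a - x k)) ^ 2 := by
  rw [← pairDispersion_const_sub w x a, pairDispersion_eq_sum_mul_sum_sub_sq]

end CommRing

theorem pairDispersion_succ_div_sum {K : Type*} [Field K] (w x : ℕ → K) {n : ℕ}
    (hn : ∑ k ∈ range n, w k ≠ 0) (hn' : ∑ k ∈ range (n + 1), w k ≠ 0) :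
    pairDispersion w x (n + 1) / ∑ k ∈ range (n + 1), w k =
      pairDispersion w x n / ∑ k ∈ range n, w k +
        w n / ((∑ k ∈ range (n + 1), w k) * ∑ k ∈ range n, w k) *
          (∑ k ∈ range n, w k * (x n - x k)) ^ 2 := by
  rw [pairDispersion_succ, pairDispersion_eq_sum_const_sub w x (x n) n]
  rw [sum_range_succ] at hn' ⊢
  field_simp
  ring

section OrderedField

variable {K : Type*} [Field K] [LinearOrder K] [IsStrictOrderedRing K]

theorem monotone_pairDispersion_div_sum {w : ℕ → K} (hw : ∀ k, 0 < w k) (x : ℕ → K) :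
    Monotone fun n => pairDispersion w x (n + 1) / ∑ k ∈ range (n + 1), w k := by
  have sum_w_pos := sum_range_succ_pos hw
  refine monotone_nat_of_le_succ fun n => ?_
  rw [pairDispersion_succ_div_sum w x (sum_w_pos n).ne' (sum_w_pos (n + 1)).ne']
  exact le_add_of_nonneg_right <| mul_nonneg
    (div_nonneg (hw _).le (mul_pos (sum_w_pos _) (sum_w_pos _)).le) (sq_nonneg _)

theorem stmt_9_general (ρ : ℕ → K) (hρpos : ∀ k, 0 < ρ k) (c : ℕ → K)
    (v : ℕ → K) (hv : ∀ n, v n = ∑ k ∈ range (n + 1), ρ k)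
    (ζ : ℕ → ℕ → K) (hζ : ∀ k l, ζ k l = ∑ s ∈ Icc k l, c s / ρ s)
    (κ : ℕ → K)
    (hκ : ∀ n, κ n = ∑ l ∈ range (n + 1), ∑ k ∈ range l, ρ k * ρ l * (ζ (k + 1) l) ^ 2) :
    (∀ n, κ n = v n * (∑ k ∈ range n, ρ k * (ζ (k + 1) n) ^ 2) -
        (∑ k ∈ range (n + 1), ρ k * ζ (k + 1) n) ^ 2) ∧
    (∀ n, 1 ≤ n → κ n / v n = κ (n - 1) / v (n - 1) +
        ρ n / (v n * v (n - 1)) * (∑ k ∈ range n, ρ k * ζ (k + 1) n) ^ 2) ∧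
    Monotone (fun n => κ n / v n) := by
  let Z (n : ℕ) : K := ∑ s ∈ range (n + 1), c s / ρ s
  have ζ_eq {k l : ℕ} (hkl : k ≤ l) : ζ (k + 1) l = Z l - Z k := by
    rw [hζ, sum_Icc_succ_eq_sub _ hkl]
  have κ_eq (n : ℕ) : κ n = pairDispersion ρ Z (n + 1) := by
    rw [hκ]
    exact sum_congr rfl fun l _ => sum_congr rfl fun k hk => by rw [ζ_eq (mem_range.mp hk).le]
  have sum_ζ (n : ℕ) : ∑ k ∈ range n, ρ k * ζ (k + 1) n = ∑ k ∈ range n, ρ k * (Z n - Z k) :=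
    sum_congr rfl fun k hk => by rw [ζ_eq (mem_range.mp hk).le]
  have sum_ζ_sq (n : ℕ) :
      ∑ k ∈ range n, ρ k * ζ (k + 1) n ^ 2 = ∑ k ∈ range n, ρ k * (Z n - Z k) ^ 2 :=
    sum_congr rfl fun k hk => by rw [ζ_eq (mem_range.mp hk).le]
  refine ⟨fun n => ?_, fun n hn => ?_, ?_⟩
  · rw [κ_eq, hv, pairDispersion_eq_sum_const_sub ρ Z (Z n), sum_ζ_sq,
      sum_range_succ (fun k => ρ k * ζ (k + 1) n), sum_ζ, ζ_eq le_rfl,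
      sum_range_succ (fun k => ρ k * (Z n - Z k)), sum_range_succ (fun k => ρ k * (Z n - Z k) ^ 2)]
    ring
  · obtain ⟨m, rfl⟩ := Nat.exists_eq_add_of_le' hn
    simpa only [κ_eq, hv, sum_ζ, Nat.add_sub_cancel] using pairDispersion_succ_div_sum ρ Z
      (sum_range_succ_pos hρpos m).ne' (sum_range_succ_pos hρpos (m + 1)).ne'
  · simpa only [κ_eq, hv] using monotone_pairDispersion_div_sum hρpos Z

end OrderedField

/-- The quadratic-form identity for `κ(n) = ∑_{0≤k<l≤n} ρ k ρ l (ζ_{k+1}^l)²`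
and the resulting monotonicity of `n ↦ κ(n)/v(n)`. -/
theorem stmt_9
    (ρ : ℕ → ℝ) (hρpos : ∀ k, 0 < ρ k) (hρ0 : ρ 0 = 1)
    (c : ℕ → ℝ)
    (v : ℕ → ℝ) (hv : ∀ n, v n = ∑ k ∈ Finset.range (n + 1), ρ k)
    (ζ : ℕ → ℕ → ℝ) (hζ : ∀ k l, ζ k l = ∑ s ∈ Finset.Icc k l, c s / ρ s)
    (κ : ℕ → ℝ)
    (hκ : ∀ n, κ n = ∑ l ∈ Finset.range (n + 1), ∑ k ∈ Finset.range l,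
      ρ k * ρ l * (ζ (k + 1) l) ^ 2) :
    (∀ n : ℕ, 1 ≤ n →
      κ n = v n * (∑ k ∈ Finset.range n, ρ k * (ζ (k + 1) n) ^ 2) -
        (∑ k ∈ Finset.range (n + 1), ρ k * ζ (k + 1) n) ^ 2) ∧
    (∀ n : ℕ, 1 ≤ n →
      κ n / v n = κ (n - 1) / v (n - 1) +
        ρ n / (v n * v (n - 1)) * (∑ k ∈ Finset.range n, ρ k * ζ (k + 1) n) ^ 2) ∧
    Monotone (fun n => κ n / v n) :=
  (stmt_9_general ρ hρpos c v hv ζ hζ κ hκ).imp_left fun h n _ => h n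
end

section
/- Assume $\delta\le a_n\le1/\delta$ for all $n\ge1$ and $v_+(n)\to+\infty$. Define $\psi_+(n)\ge0$ by $\psi_+^2(n)=n\,w_+\circ v_+^{-1}(n)$ and $\Theta_+(n)\ge0$ by $\Theta_+^2(n)=\sum_{1\le k\le l\le n}\rho_l/\rho_k$. Then there exist $C>0$ and $x_0>0$ such that for all $x\ge x_0$: $(1/C)\,v_+\big(\Theta_+^{-1}(x)\big)\le\psi_+^{-1}(x)\le C\,v_+\big(\Theta_+^{-1}(x)\big)$. -/
/-- Generalized inverse of a non-decreasing function `ℕ → ℝ` at `x`: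
`sup {n | f n ≤ x}` (with `sup ∅ = 0`; under the hypotheses below the sets are bounded). -/
noncomputable def invN (f : ℕ → ℝ) (x : ℝ) : ℕ := sSup {n : ℕ | f n ≤ x}

/-!
Write `T = Θ₊²` and `Ψ = ψ₊²`, and compare the inverses of `T` and `Ψ` at `y = x ^ 2`. Enlarging
the triangle `1 ≤ k ≤ l ≤ n` to a square gives `T n ≤ v n * w n`, and keeping only the rectangle
`k ≤ m < l` gives `(v n - v m) * (w m - w 0) ≤ T n` for `m ≤ n`. The bounded ratios enter through
the doubling bound `v (n + 1) ≤ K * v n`: it gives `m < K * v (v⁻¹ m)`, and at `n = 0` it makes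
`w m` and `w m - w 0` comparable for `m ≥ 1`. The square bound at `v⁻¹ m` yields
`T (v⁻¹ m) ≤ Ψ m`, and the rectangle bound at `v⁻¹ m ≤ n` yields `Ψ m ≤ T n`, up to a constant, as
soon as `v n ≥ 2 * K * m`.
-/

open Filter Finset

section GeneralizedInverse

variable {f : ℕ → ℝ} {x : ℝ} {n : ℕ}

theorem bddAbove_setOf_le (hf : Tendsto f atTop atTop) (x : ℝ) : BddAbove {n | f n ≤ x} := by
  obtain ⟨B, hB⟩ := eventually_atTop.1 (hf.eventually_gt_atTop x)
  exact ⟨B, fun n hn => le_of_not_ge fun hBn => (hB n hBn).not_ge hn⟩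

theorem le_invN (hf : Tendsto f atTop atTop) (hn : f n ≤ x) : n ≤ invN f x :=
  le_csSup (bddAbove_setOf_le hf x) hn

theorem apply_invN_le (hf : Tendsto f atTop atTop) (hn : f n ≤ x) : f (invN f x) ≤ x :=
  Nat.sSup_mem ⟨n, hn⟩ (bddAbove_setOf_le hf x)

theorem apply_invN_le_of_ne_zero (hf : Tendsto f atTop atTop) (h : invN f x ≠ 0) :
    f (invN f x) ≤ x := by
  obtain ⟨n, hn⟩ : {n | f n ≤ x}.Nonempty := by
    rw [Set.nonempty_iff_ne_empty]
    intro hempty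
    exact h (by rw [invN, hempty, csSup_empty, Nat.bot_eq_zero])
  exact apply_invN_le hf hn

theorem lt_apply_invN_succ (hf : Tendsto f atTop atTop) (x : ℝ) : x < f (invN f x + 1) :=
  lt_of_not_ge fun h => (le_invN hf h).not_gt (Nat.lt_succ_self _)

theorem invN_eq_invN_sq (hf : ∀ n, 0 ≤ f n) (hx : 0 ≤ x) :
    invN f x = invN (fun n => f n ^ 2) (x ^ 2) := by
  simp only [invN, sq_le_sq₀ (hf _) hx]

end GeneralizedInverse

section CumulativeSum

/-- The partial sums `ρ 0 + ⋯ + ρ n`, with the endpoint included: `cumSum ρ` is the paper's `v₊`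
and `cumSum ρ⁻¹` is its `w₊`. -/
def cumSum (ρ : ℕ → ℝ) (n : ℕ) : ℝ := ∑ k ∈ range (n + 1), ρ k

variable {ρ : ℕ → ℝ} {m n : ℕ}

theorem cumSum_zero (ρ : ℕ → ℝ) : cumSum ρ 0 = ρ 0 := sum_range_one ρ

theorem cumSum_succ (ρ : ℕ → ℝ) (n : ℕ) : cumSum ρ (n + 1) = cumSum ρ n + ρ (n + 1) :=
  sum_range_succ ρ (n + 1)

theorem sum_Icc_eq_cumSum_sub (ρ : ℕ → ℝ) (hmn : m ≤ n) :
    ∑ k ∈ Icc (m + 1) n, ρ k = cumSum ρ n - cumSum ρ m := by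
  rw [← Ico_add_one_right_eq_Icc, sum_Ico_eq_sub ρ (by omega), cumSum, cumSum]

theorem cumSum_pos (hρ : ∀ k, 0 < ρ k) (n : ℕ) : 0 < cumSum ρ n :=
  sum_pos (fun k _ => hρ k) nonempty_range_add_one

theorem cumSum_strictMono (hρ : ∀ k, 0 < ρ k) : StrictMono (cumSum ρ) :=
  strictMono_nat_of_lt_succ fun n => by linarith [cumSum_succ ρ n, hρ (n + 1)]

theorem le_cumSum (hρ : ∀ k, 0 ≤ ρ k) (n : ℕ) : ρ n ≤ cumSum ρ n :=
  single_le_sum (fun k _ => hρ k) (self_mem_range_succ n)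

theorem cumSum_succ_le_of_succ_le {A : ℝ} (hρ : ∀ k, 0 ≤ ρ k) (hA : 0 ≤ A)
    (h : ρ (n + 1) ≤ A * ρ n) : cumSum ρ (n + 1) ≤ (1 + A) * cumSum ρ n := by
  have hstep : ρ (n + 1) ≤ A * cumSum ρ n := h.trans (by gcongr; exact le_cumSum hρ n)
  linarith [cumSum_succ ρ n]

theorem one_lt_of_cumSum_succ_le {K : ℝ} (hρ : ∀ k, 0 < ρ k)
    (hK : cumSum ρ (n + 1) ≤ K * cumSum ρ n) : 1 < K := by
  have hlt : 1 * cumSum ρ n < K * cumSum ρ n := by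
    linarith [cumSum_strictMono hρ n.lt_succ_self]
  exact lt_of_mul_lt_mul_right hlt (cumSum_pos hρ n).le

theorem cumSum_inv_le_mul_sub {K : ℝ} (hρ : ∀ k, 0 < ρ k)
    (hK : cumSum ρ 1 ≤ K * cumSum ρ 0) (hn : 1 ≤ n) :
    cumSum ρ⁻¹ n ≤ K * (cumSum ρ⁻¹ n - cumSum ρ⁻¹ 0) := by
  have hinv : ∀ k, 0 < ρ⁻¹ k := fun k => inv_pos.2 (hρ k)
  have hK1 : 1 < K := one_lt_of_cumSum_succ_le hρ hK
  have hratio : ρ 1 ≤ (K - 1) * ρ 0 := by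
    have := cumSum_succ ρ 0
    rw [cumSum_zero, zero_add] at this
    rw [cumSum_zero] at hK
    linarith
  have hinv_ratio : ρ⁻¹ 0 ≤ (K - 1) * ρ⁻¹ 1 := by
    simp only [Pi.inv_apply]
    rw [← div_eq_mul_inv, le_div_iff₀ (hρ 1), inv_mul_le_iff₀ (hρ 0)]
    linarith
  have hgap : ρ⁻¹ 1 ≤ cumSum ρ⁻¹ n - cumSum ρ⁻¹ 0 := by
    have hone : cumSum ρ⁻¹ 1 = cumSum ρ⁻¹ 0 + ρ⁻¹ 1 := cumSum_succ ρ⁻¹ 0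
    linarith [(cumSum_strictMono hinv).monotone hn]
  have hzero : cumSum ρ⁻¹ 0 ≤ (K - 1) * (cumSum ρ⁻¹ n - cumSum ρ⁻¹ 0) := by
    rw [cumSum_zero] at hgap ⊢
    exact hinv_ratio.trans (mul_le_mul_of_nonneg_left hgap (sub_nonneg.2 hK1.le))
  linarith

end CumulativeSum

section TriangleSum

/-- The sum of the ratios `ρ l / ρ k` over the triangle `1 ≤ k ≤ l ≤ n`, the paper's `Θ₊² n`. -/
noncomputable def triangleSum (ρ : ℕ → ℝ) (n : ℕ) : ℝ :=
  ∑ l ∈ Icc 1 n, ∑ k ∈ Icc 1 l, ρ l / ρ k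

variable {ρ : ℕ → ℝ} {m n : ℕ}

theorem triangleSum_zero (ρ : ℕ → ℝ) : triangleSum ρ 0 = 0 := by
  simp [triangleSum]

theorem triangleSum_le (hρ : ∀ k, 0 < ρ k) (n : ℕ) :
    triangleSum ρ n ≤ cumSum ρ n * cumSum ρ⁻¹ n := by
  have hratio : ∀ l k, 0 ≤ ρ l / ρ k := fun l k => (div_pos (hρ l) (hρ k)).le
  have hsub : ∀ l ≤ n, Icc 1 l ⊆ range (n + 1) := fun l hl k hk => by
    rw [mem_Icc] at hk
    exact mem_range.2 (by omega)
  calc triangleSum ρ n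
      ≤ ∑ l ∈ Icc 1 n, ∑ k ∈ range (n + 1), ρ l / ρ k := sum_le_sum fun l hl =>
        sum_le_sum_of_subset_of_nonneg (hsub l (mem_Icc.1 hl).2) fun k _ _ => hratio l k
    _ ≤ ∑ l ∈ range (n + 1), ∑ k ∈ range (n + 1), ρ l / ρ k :=
        sum_le_sum_of_subset_of_nonneg (hsub n le_rfl) fun l _ _ =>
          sum_nonneg fun k _ => hratio l k
    _ = cumSum ρ n * cumSum ρ⁻¹ n := by
        simp only [cumSum, sum_mul_sum, Pi.inv_apply, div_eq_mul_inv]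

theorem cumSum_sub_mul_le_triangleSum (hρ : ∀ k, 0 < ρ k) (hmn : m ≤ n) :
    (cumSum ρ n - cumSum ρ m) * (cumSum ρ⁻¹ m - cumSum ρ⁻¹ 0) ≤ triangleSum ρ n := by
  have hratio : ∀ l k, 0 ≤ ρ l / ρ k := fun l k => (div_pos (hρ l) (hρ k)).le
  calc (cumSum ρ n - cumSum ρ m) * (cumSum ρ⁻¹ m - cumSum ρ⁻¹ 0)
      = ∑ l ∈ Icc (m + 1) n, ∑ k ∈ Icc 1 m, ρ l / ρ k := by
        rw [← sum_Icc_eq_cumSum_sub ρ hmn, ← sum_Icc_eq_cumSum_sub ρ⁻¹ m.zero_le, sum_mul_sum]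
        simp only [zero_add, Pi.inv_apply, div_eq_mul_inv]
    _ ≤ ∑ l ∈ Icc (m + 1) n, ∑ k ∈ Icc 1 l, ρ l / ρ k := sum_le_sum fun l hl =>
        sum_le_sum_of_subset_of_nonneg
          (Icc_subset_Icc_right (Nat.le_of_succ_le (mem_Icc.1 hl).1)) fun k _ _ => hratio l k
    _ ≤ triangleSum ρ n :=
        sum_le_sum_of_subset_of_nonneg (Icc_subset_Icc_left m.succ_pos) fun l _ _ =>
          sum_nonneg fun k _ => hratio l k

theorem tendsto_triangleSum (hρ : ∀ k, 0 < ρ k) (hv : Tendsto (cumSum ρ) atTop atTop) :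
    Tendsto (triangleSum ρ) atTop atTop := by
  have hinv : ∀ k, 0 < ρ⁻¹ k := fun k => inv_pos.2 (hρ k)
  have hgap : 0 < cumSum ρ⁻¹ 1 - cumSum ρ⁻¹ 0 := sub_pos.2 (cumSum_strictMono hinv one_pos)
  refine tendsto_atTop_mono' atTop ?_
    ((tendsto_atTop_add_const_right atTop (-cumSum ρ 1) hv).atTop_mul_const hgap)
  filter_upwards [eventually_ge_atTop 1] with n hn
  exact cumSum_sub_mul_le_triangleSum hρ hn

end TriangleSum

section Comparison

/-- The paper's `ψ₊² m = m * w₊ (v₊⁻¹ m)`. -/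
noncomputable def psiSq (ρ : ℕ → ℝ) (m : ℕ) : ℝ := m * cumSum ρ⁻¹ (invN (cumSum ρ) m)

variable {ρ : ℕ → ℝ} {K y : ℝ}

theorem psiSq_nonneg (hρ : ∀ k, 0 < ρ k) (m : ℕ) : 0 ≤ psiSq ρ m :=
  mul_nonneg m.cast_nonneg (cumSum_pos (fun k => inv_pos.2 (hρ k)) _).le

theorem tendsto_psiSq (hρ : ∀ k, 0 < ρ k) : Tendsto (psiSq ρ) atTop atTop := by
  have hinv : ∀ k, 0 < ρ⁻¹ k := fun k => inv_pos.2 (hρ k)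
  refine tendsto_atTop_mono (fun m => ?_)
    (tendsto_natCast_atTop_atTop.atTop_mul_const (cumSum_pos hinv 0))
  exact mul_le_mul_of_nonneg_left ((cumSum_strictMono hinv).monotone (Nat.zero_le _))
    m.cast_nonneg

theorem triangleSum_invN_cumSum_le_psiSq (hρ : ∀ k, 0 < ρ k)
    (hv : Tendsto (cumSum ρ) atTop atTop) (m : ℕ) :
    triangleSum ρ (invN (cumSum ρ) m) ≤ psiSq ρ m := by
  by_cases hM : invN (cumSum ρ) m = 0
  · rw [hM, triangleSum_zero]
    exact psiSq_nonneg hρ m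
  · exact (triangleSum_le hρ _).trans (mul_le_mul_of_nonneg_right
      (apply_invN_le_of_ne_zero hv hM) (cumSum_pos (fun k => inv_pos.2 (hρ k)) _).le)

theorem psiSq_le_max_triangleSum (hρ : ∀ k, 0 < ρ k) (hv : Tendsto (cumSum ρ) atTop atTop)
    (hK : cumSum ρ 1 ≤ K * cumSum ρ 0) {m n : ℕ} (hmn : 2 * K * m ≤ cumSum ρ n) :
    psiSq ρ m ≤ max (cumSum ρ 1 * cumSum ρ⁻¹ 0) (triangleSum ρ n) := by
  have hinv : ∀ k, 0 < ρ⁻¹ k := fun k => inv_pos.2 (hρ k)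
  have hK1 : 1 < K := one_lt_of_cumSum_succ_le hρ hK
  have hmK : (m : ℝ) ≤ K * m := le_mul_of_one_le_left m.cast_nonneg hK1.le
  by_cases hM : invN (cumSum ρ) m = 0
  · have hlt := lt_apply_invN_succ hv (m : ℝ)
    rw [hM, zero_add] at hlt
    rw [psiSq, hM]
    exact le_max_of_le_left (mul_le_mul_of_nonneg_right hlt.le (cumSum_pos hinv 0).le)
  have hle := apply_invN_le_of_ne_zero hv hM
  rw [psiSq]
  set M := invN (cumSum ρ) m
  have hMn : M ≤ n := (cumSum_strictMono hρ).le_iff_le.1 (by linarith [m.cast_nonneg (α := ℝ)])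
  have hgap : 0 ≤ cumSum ρ⁻¹ M - cumSum ρ⁻¹ 0 :=
    sub_nonneg.2 ((cumSum_strictMono hinv).monotone M.zero_le)
  refine le_max_of_le_right ?_
  calc m * cumSum ρ⁻¹ M
      ≤ m * (K * (cumSum ρ⁻¹ M - cumSum ρ⁻¹ 0)) := by
        gcongr
        exact cumSum_inv_le_mul_sub hρ hK (Nat.one_le_iff_ne_zero.2 hM)
    _ = (K * m) * (cumSum ρ⁻¹ M - cumSum ρ⁻¹ 0) := by ring
    _ ≤ (cumSum ρ n - cumSum ρ M) * (cumSum ρ⁻¹ M - cumSum ρ⁻¹ 0) := by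
        gcongr
        linarith
    _ ≤ triangleSum ρ n := cumSum_sub_mul_le_triangleSum hρ hMn

theorem invN_psiSq_le (hρ : ∀ k, 0 < ρ k) (hv : Tendsto (cumSum ρ) atTop atTop)
    (hK : ∀ n, cumSum ρ (n + 1) ≤ K * cumSum ρ n) (hy : 0 ≤ y) :
    (invN (psiSq ρ) y : ℝ) ≤ K * cumSum ρ (invN (triangleSum ρ) y) := by
  have hK1 : 1 < K := one_lt_of_cumSum_succ_le hρ (hK 0)
  have hpsi : psiSq ρ (invN (psiSq ρ) y) ≤ y :=
    apply_invN_le (tendsto_psiSq hρ) (n := 0) (by simpa [psiSq] using hy)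
  set m := invN (psiSq ρ) y
  have hM : invN (cumSum ρ) m ≤ invN (triangleSum ρ) y :=
    le_invN (tendsto_triangleSum hρ hv) ((triangleSum_invN_cumSum_le_psiSq hρ hv m).trans hpsi)
  calc (m : ℝ)
      ≤ cumSum ρ (invN (cumSum ρ) m + 1) := (lt_apply_invN_succ hv _).le
    _ ≤ K * cumSum ρ (invN (cumSum ρ) m) := hK _
    _ ≤ K * cumSum ρ (invN (triangleSum ρ) y) := by
        gcongr
        exact (cumSum_strictMono hρ).monotone hM

theorem cumSum_invN_triangleSum_le (hρ : ∀ k, 0 < ρ k) (hv : Tendsto (cumSum ρ) atTop atTop)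
    (hK : cumSum ρ 1 ≤ K * cumSum ρ 0)
    (hy : cumSum ρ 1 * cumSum ρ⁻¹ 0 ≤ y) (hy1 : psiSq ρ 1 ≤ y) :
    cumSum ρ (invN (triangleSum ρ) y) ≤ 4 * K * invN (psiSq ρ) y := by
  have hK1 : 1 < K := one_lt_of_cumSum_succ_le hρ hK
  have hT : triangleSum ρ (invN (triangleSum ρ) y) ≤ y :=
    apply_invN_le (tendsto_triangleSum hρ hv) (n := 0)
      ((triangleSum_zero ρ).trans_le ((psiSq_nonneg hρ 1).trans hy1))
  have hm : (1 : ℝ) ≤ invN (psiSq ρ) y := by exact_mod_cast le_invN (tendsto_psiSq hρ) hy1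
  have hlt := lt_apply_invN_succ (tendsto_psiSq hρ) y
  have hsucc : cumSum ρ (invN (triangleSum ρ) y) ≤ 2 * K * (invN (psiSq ρ) y + 1 : ℕ) := by
    by_contra! hgt
    exact hlt.not_ge ((psiSq_le_max_triangleSum hρ hv hK hgt.le).trans (max_le hy hT))
  push_cast at hsucc
  nlinarith

end Comparison

theorem stmt_10_general {ρ : ℕ → ℝ} (hρ : ∀ n, 0 < ρ n) {K : ℝ}
    (hK : ∀ n, cumSum ρ (n + 1) ≤ K * cumSum ρ n) (hv : Tendsto (cumSum ρ) atTop atTop)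
    {ψ Θ : ℕ → ℝ} (hψ0 : ∀ n, 0 ≤ ψ n) (hψ : ∀ n, ψ n ^ 2 = psiSq ρ n)
    (hΘ0 : ∀ n, 0 ≤ Θ n) (hΘ : ∀ n, Θ n ^ 2 = triangleSum ρ n) :
    ∃ C : ℝ, 0 < C ∧ ∃ x₀ : ℝ, 0 < x₀ ∧ ∀ x : ℝ, x₀ ≤ x →
      (1 / C) * cumSum ρ (invN Θ x) ≤ (invN ψ x : ℝ) ∧
        (invN ψ x : ℝ) ≤ C * cumSum ρ (invN Θ x) := by
  have hK1 : 1 < K := one_lt_of_cumSum_succ_le hρ (hK 0)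
  have hlarge : ∀ᶠ x : ℝ in atTop, cumSum ρ 1 * cumSum ρ⁻¹ 0 ≤ x ^ 2 ∧ psiSq ρ 1 ≤ x ^ 2 :=
    have hsq := tendsto_pow_atTop (α := ℝ) two_ne_zero
    (hsq.eventually_ge_atTop _).and (hsq.eventually_ge_atTop _)
  obtain ⟨x₁, hx₁⟩ := eventually_atTop.1 hlarge
  refine ⟨4 * K, by positivity, max x₁ 1, by positivity, fun x hx => ?_⟩
  have hx0 : 0 ≤ x := zero_le_one.trans ((le_max_right _ _).trans hx)
  obtain ⟨hy, hy1⟩ := hx₁ x ((le_max_left _ _).trans hx)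
  simp only [invN_eq_invN_sq hψ0 hx0, invN_eq_invN_sq hΘ0 hx0, hψ, hΘ]
  constructor
  · rw [one_div, inv_mul_le_iff₀ (by positivity)]
    exact cumSum_invN_triangleSum_le hρ hv (hK 0) hy hy1
  · refine (invN_psiSq_le hρ hv hK (sq_nonneg x)).trans ?_
    exact mul_le_mul_of_nonneg_right (by linarith) (cumSum_pos hρ _).le

theorem pos_of_eq_pred_mul {a ρ : ℕ → ℝ} (hρ0 : 0 < ρ 0) (ha : ∀ n, 1 ≤ n → 0 < a n)
    (hρ : ∀ n, 1 ≤ n → ρ n = ρ (n - 1) * a n) : ∀ n, 0 < ρ n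
  | 0 => hρ0
  | n + 1 => by
    rw [hρ (n + 1) n.succ_pos, Nat.add_sub_cancel]
    exact mul_pos (pos_of_eq_pred_mul hρ0 ha hρ n) (ha (n + 1) n.succ_pos)

/-- Comparison of the inverse of `ψ₊` (where `ψ₊²(n) = n · w₊(v₊⁻¹(n))`) with
`v₊ ∘ Θ₊⁻¹` (where `Θ₊²(n) = ∑_{1≤k≤l≤n} ρ l / ρ k`), up to multiplicative constants. -/
theorem stmt_10
    (δ : ℝ) (hδ0 : 0 < δ) (hδ1 : δ < 1)
    (a : ℕ → ℝ) (ha : ∀ n : ℕ, 1 ≤ n → δ ≤ a n ∧ a n ≤ 1 / δ)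
    (ρ : ℕ → ℝ) (hρ0 : ρ 0 = 1)
    (hρ : ∀ n : ℕ, 1 ≤ n → ρ n = ρ (n - 1) * a n)
    (v w : ℕ → ℝ)
    (hv : ∀ n, v n = ∑ k ∈ Finset.range (n + 1), ρ k)
    (hw : ∀ n, w n = ∑ k ∈ Finset.range (n + 1), 1 / ρ k)
    (hvlim : Filter.Tendsto v Filter.atTop Filter.atTop)
    (ψ Θ : ℕ → ℝ)
    (hψ0 : ∀ n, 0 ≤ ψ n) (hψ : ∀ n : ℕ, (ψ n) ^ 2 = n * w (invN v n))
    (hΘ0 : ∀ n, 0 ≤ Θ n)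
    (hΘ : ∀ n : ℕ, (Θ n) ^ 2 = ∑ l ∈ Finset.Icc 1 n, ∑ k ∈ Finset.Icc 1 l, ρ l / ρ k) :
    ∃ C : ℝ, 0 < C ∧ ∃ x₀ : ℝ, 0 < x₀ ∧ ∀ x : ℝ, x₀ ≤ x →
      (1 / C) * v (invN Θ x) ≤ (invN ψ x : ℝ) ∧ (invN ψ x : ℝ) ≤ C * v (invN Θ x) := by
  obtain rfl : v = cumSum ρ := funext hv
  obtain rfl : w = cumSum ρ⁻¹ := funext fun n => by simp [hw, cumSum]
  have hpos : ∀ n, 0 < ρ n :=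
    pos_of_eq_pred_mul (hρ0 ▸ one_pos) (fun n hn => hδ0.trans_le (ha n hn).1) hρ
  have hdoubling (n : ℕ) : cumSum ρ (n + 1) ≤ (1 + 1 / δ) * cumSum ρ n := by
    refine cumSum_succ_le_of_succ_le (fun k => (hpos k).le) (by positivity) ?_
    rw [hρ (n + 1) n.succ_pos, Nat.add_sub_cancel, mul_comm]
    exact mul_le_mul_of_nonneg_right (ha (n + 1) n.succ_pos).2 (hpos n).le
  exact stmt_10_general hpos hdoubling hvlim hψ0 hψ hΘ0 hΘ
end
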